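/- arXiv:1502.00440 — 7 statements merged into one kernel-verified Lean document; each statement's English description precedes it below -/
import Mathlib

section
/- Let n ≥ 3 and let T : ℓ_n × ⋯ × ℓ_n → 𝕂 (n copies of ℓ_n) be the continuous n-linear form T((λ_j^{(1)})_j, …, (λ_j^{(n)})_j) = ∑_{j=1}^∞ λ_j^{(1)} ⋯ λ_j^{(n)} (convergent by Hölder's inequality). Then T has cotype q if and only if q ≥ 1; in particular, T has no cotype q with 2/n ≤ q < 1, and 1 = min{q : T has cotype q}. -/
/-!
The constant `1` works for cotype `q ≥ 1`. Since `∑ |t_j|^q ≤ (∑ |t_j|)^q`, only `q = 1` matters.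
Hölder's inequality on pairs (vector index `j`, coordinate `m`) bounds `∑ j, ‖T(x_j)‖` by the
product of the `ℓ_n` norms `(∑ j, ∑ m, |x_j(m)|^n)^{1/n}`, and each of these is at most the
Rademacher average, because `ℓ_n` has cotype `n` with constant `1`
(`sum_coord_pow_le_radNorm_pow`). That last fact is elementary since the average is taken in `L²`:
orthogonality of the signs gives `∑ j, |x_j(m)|² = 𝔼 |∑ j, ε_j x_j(m)|²` in every coordinate, and
Minkowski's inequality in `ℓ_{n/2}` exchanges the mean with the norm.

Conversely, on the unit vectors `e_1, …, e_k` the form takes the value `1` and the Rademacher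
average is `k^{1/n}` in each argument, so cotype `q` forces `k^{1/q} ≤ M k` for all `k`, i.e.
`q ≥ 1`.
-/

open scoped BigOperators ENNReal

noncomputable def radNorm {F : Type*} [NormedAddCommGroup F] {k : ℕ} (y : Fin k → F) : ℝ :=
  Real.sqrt (((2 : ℝ) ^ k)⁻¹ * ∑ ε : Fin k → Bool, ‖∑ j, (if ε j then y j else -y j)‖ ^ 2)

section Defs

variable {𝕜 : Type*} [RCLike 𝕜] {n : ℕ} {E : Fin n → Type*} {F : Type*}
  [∀ i, NormedAddCommGroup (E i)] [∀ i, NormedSpace 𝕜 (E i)]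
  [NormedAddCommGroup F] [NormedSpace 𝕜 F]

/-- The `n`-linear operator `T` has type `(p 0, …, p (n-1))` with constant `C`. -/
def HasTypeWith (T : ContinuousMultilinearMap 𝕜 E F) (p : Fin n → ℝ) (C : ℝ) : Prop :=
  ∀ (k : ℕ) (x : ∀ i, Fin k → E i),
    radNorm (fun j => T (fun i => x i j)) ≤ C * ∏ i, (∑ j, ‖x i j‖ ^ p i) ^ (1 / p i)

/-- The `n`-linear operator `T` has type `(p 0, …, p (n-1))`. -/
def HasType (T : ContinuousMultilinearMap 𝕜 E F) (p : Fin n → ℝ) : Prop :=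
  ∃ C > 0, HasTypeWith T p C

/-- The `n`-linear operator `T` has cotype `q` with constant `M`. -/
def HasCotypeWith (T : ContinuousMultilinearMap 𝕜 E F) (q M : ℝ) : Prop :=
  ∀ (k : ℕ) (x : ∀ i, Fin k → E i),
    (∑ j, ‖T (fun i => x i j)‖ ^ q) ^ (1 / q) ≤ M * ∏ i, radNorm (x i)

/-- The `n`-linear operator `T` has cotype `q`. -/
def HasCotype (T : ContinuousMultilinearMap 𝕜 E F) (q : ℝ) : Prop :=
  ∃ M > 0, HasCotypeWith T q M

end Defs

section LinDefs

variable {𝕜 : Type*} [RCLike 𝕜] {E F : Type*}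
  [NormedAddCommGroup E] [NormedSpace 𝕜 E] [NormedAddCommGroup F] [NormedSpace 𝕜 F]

/-- The linear operator `u` has type `p` with constant `C`. -/
def LinHasTypeWith (u : E →L[𝕜] F) (p C : ℝ) : Prop :=
  ∀ (k : ℕ) (x : Fin k → E),
    radNorm (fun j => u (x j)) ≤ C * (∑ j, ‖x j‖ ^ p) ^ (1 / p)

/-- The linear operator `u` has type `p`. -/
def LinHasType (u : E →L[𝕜] F) (p : ℝ) : Prop := ∃ C > 0, LinHasTypeWith u p C

/-- The linear operator `u` has cotype `q` with constant `C`. -/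
def LinHasCotypeWith (u : E →L[𝕜] F) (q C : ℝ) : Prop :=
  ∀ (k : ℕ) (x : Fin k → E),
    (∑ j, ‖u (x j)‖ ^ q) ^ (1 / q) ≤ C * radNorm x

/-- The linear operator `u` has cotype `q`. -/
def LinHasCotype (u : E →L[𝕜] F) (q : ℝ) : Prop := ∃ C > 0, LinHasCotypeWith u q C

end LinDefs

/-- Orthogonality of the Rademacher signs: for scalars, the mean square over all choices of signs
is the sum of the squares. -/
lemma sum_signs_norm_sq {𝕜 : Type*} [RCLike 𝕜] :
    ∀ {k : ℕ} (a : Fin k → 𝕜),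
      ((2 : ℝ) ^ k)⁻¹ * ∑ ε : Fin k → Bool, ‖∑ j, (if ε j then a j else -a j)‖ ^ 2
        = ∑ j, ‖a j‖ ^ 2 := by
  intro k
  induction k with
  | zero => intro a; simp
  | succ k ih =>
    intro a
    rw [Fin.sum_univ_succ, ← ih (fun j => a j.succ)]
    rw [← (Fin.consEquiv (fun _ : Fin (k + 1) => Bool)).sum_comp, Fintype.sum_prod_type]
    simp only [Fintype.sum_bool, Fin.consEquiv_apply, Fin.sum_univ_succ, Fin.cons_zero,
      Fin.cons_succ, if_true, Bool.false_eq_true, if_false]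
    rw [← Finset.sum_add_distrib]
    -- The parallelogram law pairs the two choices of the first sign.
    have h : ∀ S : 𝕜, ‖a 0 + S‖ ^ 2 + ‖-a 0 + S‖ ^ 2 = 2 * ‖a 0‖ ^ 2 + 2 * ‖S‖ ^ 2 := by
      intro S
      have h1 := parallelogram_law_with_norm 𝕜 (a 0) S
      have h2 : ‖-a 0 + S‖ = ‖a 0 - S‖ := by rw [← norm_neg]; congr 1; ring
      rw [h2]; nlinarith
    simp_rw [h]
    rw [Finset.sum_add_distrib, ← Finset.mul_sum Finset.univ (fun ε : Fin k → Bool =>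
      ‖∑ j, (if ε j then a j.succ else -a j.succ)‖ ^ 2)]
    simp only [Finset.sum_const, Finset.card_univ, Fintype.card_fun, Fintype.card_bool,
      Fintype.card_fin, nsmul_eq_mul]
    push_cast
    field_simp
    ring

lemma sum_rpow_le_rpow_sum {ι : Type*} (s : Finset ι) (b : ι → ℝ) (hb : ∀ i, 0 ≤ b i) {p : ℝ}
    (hp : 1 ≤ p) : ∑ i ∈ s, b i ^ p ≤ (∑ i ∈ s, b i) ^ p := by
  classical
  induction s using Finset.induction_on with
  | empty => simp [Real.zero_rpow (by linarith : p ≠ 0)]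
  | insert i s hi ih =>
    rw [Finset.sum_insert hi, Finset.sum_insert hi]
    exact (by gcongr : b i ^ p + ∑ i ∈ s, b i ^ p ≤ b i ^ p + (∑ i ∈ s, b i) ^ p).trans
      (Real.add_rpow_le_rpow_add (hb i) (Finset.sum_nonneg fun j _ => hb j) hp)

/-- Minkowski's inequality for a finite sum of functions. -/
lemma Lp_sum_le {ι κ : Type*} (s : Finset ι) (t : Finset κ) (f : κ → ι → ℝ)
    (hf : ∀ e i, 0 ≤ f e i) {p : ℝ} (hp : 1 ≤ p) :
    (∑ m ∈ s, (∑ e ∈ t, f e m) ^ p) ^ (1 / p) ≤ ∑ e ∈ t, (∑ m ∈ s, f e m ^ p) ^ (1 / p) := by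
  classical
  induction t using Finset.induction_on with
  | empty =>
    have h0 : p ≠ 0 := by linarith
    simp [Real.zero_rpow h0, Real.zero_rpow (inv_ne_zero h0)]
  | insert e t he ih =>
    simp only [Finset.sum_insert he]
    refine (Real.Lp_add_le_of_nonneg s hp (fun i _ => hf e i)
      (fun i _ => Finset.sum_nonneg fun c _ => hf c i)).trans ?_
    gcongr

lemma radNorm_nonneg {F : Type*} [NormedAddCommGroup F] {k : ℕ} (y : Fin k → F) :
    0 ≤ radNorm y := Real.sqrt_nonneg _

lemma radNorm_sq {F : Type*} [NormedAddCommGroup F] {k : ℕ} (y : Fin k → F) :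
    radNorm y ^ 2 =
      ((2 : ℝ) ^ k)⁻¹ * ∑ ε : Fin k → Bool, ‖∑ j, (if ε j then y j else -y j)‖ ^ 2 :=
  Real.sq_sqrt (by positivity)

/-- `ℓ_n` has cotype `n` with constant `1`, on a finite set `s` of coordinates. The sum
`∑ j, ‖x j m‖ ^ n` is at most the `n/2`-th power of the mean over signs of the squared `m`-th
coordinate, and Minkowski's inequality in `ℓ_{n/2}` takes that mean out of the norm. -/
lemma sum_coord_pow_le_radNorm_pow {𝕜 : Type*} [RCLike 𝕜] {n k : ℕ} (hn : 2 ≤ n)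
    [Fact ((1 : ℝ≥0∞) ≤ (n : ℝ≥0∞))]
    (x : Fin k → lp (fun _ : ℕ => 𝕜) (n : ℝ≥0∞)) (s : Finset ℕ) :
    ∑ m ∈ s, ∑ j, ‖x j m‖ ^ n ≤ radNorm x ^ n := by
  set p : ℝ := (n : ℝ) / 2 with hpdef
  have hp : 1 ≤ p := by
    have : (2 : ℝ) ≤ n := by exact_mod_cast hn
    rw [hpdef]; linarith
  have hp0 : 0 < p := by linarith
  have hpow : ∀ r : ℝ, 0 ≤ r → (r ^ 2) ^ p = r ^ n := by
    intro r hr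
    rw [← Real.rpow_natCast r 2, ← Real.rpow_mul hr, ← Real.rpow_natCast r n]
    congr 1; rw [hpdef]; push_cast; ring
  set S : (Fin k → Bool) → lp (fun _ : ℕ => 𝕜) (n : ℝ≥0∞) :=
    fun ε => ∑ j, (if ε j then x j else -x j) with hS
  have hSm : ∀ ε m, S ε m = ∑ j, (if ε j then x j m else -x j m) := by
    intro ε m
    simp only [hS, lp.coeFn_sum, Finset.sum_apply]
    refine Finset.sum_congr rfl fun j _ => ?_
    split_ifs <;> simp
  have h1 : ∀ m, ∑ j, ‖x j m‖ ^ n ≤ (∑ ε, ((2 : ℝ) ^ k)⁻¹ * ‖S ε m‖ ^ 2) ^ p := by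
    intro m
    have e : ∑ ε, ((2 : ℝ) ^ k)⁻¹ * ‖S ε m‖ ^ 2 = ∑ j, ‖x j m‖ ^ 2 := by
      rw [← sum_signs_norm_sq, Finset.mul_sum]
      simp_rw [hSm]
    rw [e]
    refine le_trans (le_of_eq ?_)
      (sum_rpow_le_rpow_sum Finset.univ (fun j => ‖x j m‖ ^ 2) (fun j => by positivity) hp)
    exact Finset.sum_congr rfl fun j _ => (hpow _ (norm_nonneg _)).symm
  have h2 : ∀ ε, (∑ m ∈ s, (((2 : ℝ) ^ k)⁻¹ * ‖S ε m‖ ^ 2) ^ p) ^ (1 / p)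
      ≤ ((2 : ℝ) ^ k)⁻¹ * ‖S ε‖ ^ 2 := by
    intro ε
    have h3 : ∑ m ∈ s, ‖S ε m‖ ^ n ≤ ‖S ε‖ ^ n := by
      have := lp.sum_rpow_le_norm_rpow (p := (n : ℝ≥0∞)) (by simp; omega) (S ε) s
      simpa using this
    rw [one_div, Real.rpow_inv_le_iff_of_pos (Finset.sum_nonneg fun m _ => by positivity)
      (by positivity) hp0, Real.mul_rpow (by positivity) (by positivity), hpow ‖S ε‖ (norm_nonneg _)]
    have : ∀ m, (((2 : ℝ) ^ k)⁻¹ * ‖S ε m‖ ^ 2) ^ p = (((2 : ℝ) ^ k)⁻¹) ^ p * ‖S ε m‖ ^ n := by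
      intro m
      rw [Real.mul_rpow (by positivity) (by positivity), hpow _ (norm_nonneg _)]
    simp_rw [this, ← Finset.mul_sum]
    gcongr
  have h4 : (∑ m ∈ s, (∑ ε, ((2 : ℝ) ^ k)⁻¹ * ‖S ε m‖ ^ 2) ^ p) ^ (1 / p) ≤ radNorm x ^ 2 := by
    refine (Lp_sum_le s Finset.univ (fun ε m => ((2 : ℝ) ^ k)⁻¹ * ‖S ε m‖ ^ 2)
      (fun _ _ => by positivity) hp).trans ?_
    rw [radNorm_sq, Finset.mul_sum]
    exact Finset.sum_le_sum fun ε _ => h2 ε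
  rw [one_div, Real.rpow_inv_le_iff_of_pos (Finset.sum_nonneg fun m _ => by positivity)
    (by positivity) hp0, hpow _ (radNorm_nonneg x)] at h4
  exact (Finset.sum_le_sum fun m _ => h1 m).trans h4

/-- Hölder's inequality for `n` functions with all exponents equal to `n`. -/
lemma sum_prod_le_prod_of_sum_pow_le {β : Type*} {n : ℕ} (hn : n ≠ 0) (s : Finset β)
    (a : Fin n → β → ℝ) (ha : ∀ i b, 0 ≤ a i b) (R : Fin n → ℝ) (hR : ∀ i, 0 ≤ R i)
    (h : ∀ i, ∑ b ∈ s, a i b ^ n ≤ R i ^ n) :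
    ∑ b ∈ s, ∏ i, a i b ≤ ∏ i, R i := by
  by_cases h0 : ∃ i, R i = 0
  · obtain ⟨i, hi⟩ := h0
    have hz : ∀ b ∈ s, a i b = 0 := by
      intro b hb
      have h1 : a i b ^ n ≤ 0 :=
        (Finset.single_le_sum (f := fun b => a i b ^ n)
          (fun c _ => pow_nonneg (ha i c) n) hb).trans ((h i).trans (by simp [hi, hn]))
      exact pow_eq_zero_iff hn |>.1 (le_antisymm h1 (pow_nonneg (ha i b) n))
    rw [Finset.sum_eq_zero fun b hb => Finset.prod_eq_zero (Finset.mem_univ i) (hz b hb)]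
    exact Finset.prod_nonneg fun i _ => hR i
  · push Not at h0
    have hpos : ∀ i, 0 < R i := fun i => lt_of_le_of_ne (hR i) (h0 i).symm
    have hP : 0 < ∏ i, R i := Finset.prod_pos fun i _ => hpos i
    have hn' : (n : ℝ) ≠ 0 := by exact_mod_cast hn
    have key : ∀ b, ∏ i, a i b ≤ (∏ i, R i) * ∑ i, (n : ℝ)⁻¹ * (a i b ^ n / R i ^ n) := by
      intro b
      have := Real.geom_mean_le_arith_mean_weighted Finset.univ (fun _ : Fin n => (n : ℝ)⁻¹)
        (fun i => (a i b / R i) ^ n) (fun _ _ => by positivity) (by simp [hn'])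
        (fun i _ => pow_nonneg (div_nonneg (ha i b) (hR i)) n)
      simp_rw [fun i => Real.pow_rpow_inv_natCast (div_nonneg (ha i b) (hR i)) hn] at this
      simp only [Finset.prod_div_distrib, div_pow] at this
      rwa [div_le_iff₀' hP] at this
    calc ∑ b ∈ s, ∏ i, a i b
        ≤ ∑ b ∈ s, (∏ i, R i) * ∑ i, (n : ℝ)⁻¹ * (a i b ^ n / R i ^ n) :=
          Finset.sum_le_sum fun b _ => key b
      _ = (∏ i, R i) * ∑ i, (n : ℝ)⁻¹ * ((∑ b ∈ s, a i b ^ n) / R i ^ n) := by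
          rw [← Finset.mul_sum, Finset.sum_comm]
          simp_rw [Finset.sum_div, Finset.mul_sum]
      _ ≤ (∏ i, R i) * ∑ _i : Fin n, (n : ℝ)⁻¹ * 1 := by
          gcongr with i _
          exact (div_le_one (pow_pos (hpos i) n)).2 (h i)
      _ = ∏ i, R i := by simp [hn']

/-- The diagonal form has cotype `1` with constant `1`. -/
lemma sum_norm_diagonal_le {𝕜 : Type*} [RCLike 𝕜] {n k : ℕ} (hn : 2 ≤ n)
    [Fact ((1 : ℝ≥0∞) ≤ (n : ℝ≥0∞))]
    (x : Fin n → Fin k → lp (fun _ : ℕ => 𝕜) (n : ℝ≥0∞)) :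
    ∑ j, ‖∑' m : ℕ, ∏ i, x i j m‖ ≤ ∏ i, radNorm (x i) := by
  have hfin : ∀ s : Finset ℕ, ∑ m ∈ s, ∑ j, ∏ i, ‖x i j m‖ ≤ ∏ i, radNorm (x i) := by
    intro s
    rw [← Finset.sum_product']
    refine sum_prod_le_prod_of_sum_pow_le (by omega) (s ×ˢ Finset.univ)
      (fun i b => ‖x i b.2 b.1‖) (fun _ _ => norm_nonneg _) _ (fun i => radNorm_nonneg _) ?_
    intro i
    rw [Finset.sum_product]
    exact sum_coord_pow_le_radNorm_pow hn (x i) s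
  have hnn : ∀ m j, 0 ≤ ∏ i, ‖x i j m‖ := fun m j =>
    Finset.prod_nonneg fun i _ => norm_nonneg _
  have hsum : ∀ j, Summable fun m => ∏ i, ‖x i j m‖ := by
    intro j
    refine summable_of_sum_le (fun m => hnn m j) (c := ∏ i, radNorm (x i)) fun s => ?_
    refine le_trans (Finset.sum_le_sum fun m _ => ?_) (hfin s)
    exact Finset.single_le_sum (f := fun j => ∏ i, ‖x i j m‖) (fun j _ => hnn m j)
      (Finset.mem_univ j)
  calc ∑ j, ‖∑' m : ℕ, ∏ i, x i j m‖
      ≤ ∑ j, ∑' m : ℕ, ∏ i, ‖x i j m‖ := by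
        refine Finset.sum_le_sum fun j _ => ?_
        have hj : Summable fun m => ‖∏ i, x i j m‖ := by simpa only [norm_prod] using hsum j
        simpa only [norm_prod] using norm_tsum_le_tsum_norm hj
    _ = ∑' m : ℕ, ∑ j, ∏ i, ‖x i j m‖ :=
        (Summable.tsum_finsetSum fun j _ => hsum j).symm
    _ ≤ ∏ i, radNorm (x i) :=
        Real.tsum_le_of_sum_le (fun m => Finset.sum_nonneg fun j _ => hnn m j) hfin

/-- Every signed sum of the first `k` unit vectors has norm `k ^ (1 / n)`, hence so does their
Rademacher average. -/
lemma radNorm_single_pow {𝕜 : Type*} [RCLike 𝕜] {n : ℕ} (hn : n ≠ 0)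
    [Fact ((1 : ℝ≥0∞) ≤ (n : ℝ≥0∞))] (k : ℕ) :
    radNorm (fun j : Fin k => lp.single (E := fun _ : ℕ => 𝕜) (n : ℝ≥0∞) (j : ℕ) (1 : 𝕜)) ^ n
      = k := by
  have key : ∀ ε : Fin k → Bool,
      ‖∑ j : Fin k, (if ε j then lp.single (E := fun _ : ℕ => 𝕜) (n : ℝ≥0∞) (j : ℕ) (1 : 𝕜)
        else -lp.single (E := fun _ : ℕ => 𝕜) (n : ℝ≥0∞) (j : ℕ) (1 : 𝕜))‖
        = (k : ℝ) ^ ((n : ℝ)⁻¹) := by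
    intro ε
    let f : ℕ → 𝕜 := fun m => if h : m < k then (if ε ⟨m, h⟩ then 1 else -1) else 0
    have h1 : ∑ j : Fin k, (if ε j then lp.single (E := fun _ : ℕ => 𝕜) (n : ℝ≥0∞) (j : ℕ) (1 : 𝕜)
        else -lp.single (E := fun _ : ℕ => 𝕜) (n : ℝ≥0∞) (j : ℕ) (1 : 𝕜))
        = ∑ m ∈ Finset.range k, lp.single (E := fun _ : ℕ => 𝕜) (n : ℝ≥0∞) m (f m) := by
      rw [Finset.sum_range]
      refine Finset.sum_congr rfl fun j _ => ?_
      simp only [f, j.isLt, dif_pos, Fin.eta]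
      split_ifs <;> simp
    have h2 := lp.norm_sum_single (E := fun _ : ℕ => 𝕜) (p := (n : ℝ≥0∞))
      (by simp; omega) f (Finset.range k)
    rw [← h1] at h2
    have h3 : ∑ m ∈ Finset.range k, ‖f m‖ ^ (n : ℝ≥0∞).toReal = k := by
      rw [Finset.sum_congr rfl (g := fun _ => (1 : ℝ))]
      · simp
      · intro m hm
        have : ‖f m‖ = 1 := by
          simp only [f, Finset.mem_range.1 hm, dif_pos]
          split_ifs <;> simp
        simp [this]
    rw [h3, ENNReal.toReal_natCast] at h2
    exact (Real.eq_rpow_inv (norm_nonneg _) (Nat.cast_nonneg k) (by exact_mod_cast hn)).2 h2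
  have hr : radNorm (fun j : Fin k =>
      lp.single (E := fun _ : ℕ => 𝕜) (n : ℝ≥0∞) (j : ℕ) (1 : 𝕜)) = (k : ℝ) ^ ((n : ℝ)⁻¹) := by
    unfold radNorm
    simp_rw [key]
    simp only [Finset.sum_const, Finset.card_univ, Fintype.card_fun, Fintype.card_bool,
      Fintype.card_fin, nsmul_eq_mul]
    push_cast
    rw [← mul_assoc, inv_mul_cancel₀ (by positivity), one_mul, Real.sqrt_sq (by positivity)]
  rw [hr, Real.rpow_inv_natCast_pow (by positivity) hn]

/-- For `n ≥ 3`, the continuous `n`-linear form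
`T : ℓ_n × ⋯ × ℓ_n → 𝕂`, `T(x⁽¹⁾,…,x⁽ⁿ⁾) = ∑_j x⁽¹⁾_j ⋯ x⁽ⁿ⁾_j`,
has cotype `q` if and only if `q ≥ 1`; in particular it has no cotype `q < 1` and
`1 = min {q : T has cotype q}`. -/
theorem diagonal_form_cotype_iff
    {𝕜 : Type*} [RCLike 𝕜] (n : ℕ) (hn : 3 ≤ n) [Fact ((1 : ℝ≥0∞) ≤ (n : ℝ≥0∞))]
    (T : ContinuousMultilinearMap 𝕜 (fun _ : Fin n => lp (fun _ : ℕ => 𝕜) (n : ℝ≥0∞)) 𝕜)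
    (hT : ∀ x : Fin n → lp (fun _ : ℕ => 𝕜) (n : ℝ≥0∞),
      T x = ∑' j : ℕ, ∏ i : Fin n, x i j) :
    ∀ q : ℝ, 0 < q → (HasCotype T q ↔ 1 ≤ q) := by
  intro q hq
  have hn0 : n ≠ 0 := by omega
  constructor
  · rintro ⟨M, hM, h⟩
    by_contra! hq1
    -- Testing on unit vectors gives `k ^ (1 / q - 1) ≤ M` for all `k ≥ 1`.
    have hk : ∀ k : ℕ, 0 < k → (k : ℝ) ^ (1 / q - 1) ≤ M := by
      intro k hk
      have hkR : (0 : ℝ) < k := by exact_mod_cast hk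
      have h1 := h k (fun _ j => lp.single (E := fun _ : ℕ => 𝕜) (n : ℝ≥0∞) (j : ℕ) (1 : 𝕜))
      have hval : ∀ j : Fin k,
          T (fun _ => lp.single (E := fun _ : ℕ => 𝕜) (n : ℝ≥0∞) (j : ℕ) (1 : 𝕜)) = 1 := by
        intro j
        rw [hT, tsum_eq_single (j : ℕ)]
        · simp
        · intro m hm
          simp [Pi.single_eq_of_ne hm, hn0]
      simp only [hval, Finset.prod_const, Finset.card_univ, Fintype.card_fin,
        radNorm_single_pow hn0] at h1
      rw [Real.rpow_sub_one hkR.ne', div_le_iff₀ hkR]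
      simpa using h1
    have hpos : 0 < 1 / q - 1 := by
      have := (one_lt_div hq).2 hq1
      linarith
    have ht := (tendsto_rpow_atTop hpos).comp (tendsto_natCast_atTop_atTop (R := ℝ))
    obtain ⟨k, hk1, hk2⟩ :=
      ((ht.eventually_gt_atTop M).and (Filter.eventually_gt_atTop 0)).exists
    exact absurd (hk k hk2) (not_le.2 hk1)
  · intro hq1
    refine ⟨1, one_pos, fun k x => ?_⟩
    rw [one_mul]
    refine le_trans ?_ (sum_norm_diagonal_le (by omega) x)
    simp_rw [hT]
    rw [one_div, Real.rpow_inv_le_iff_of_pos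
      (Finset.sum_nonneg fun j _ => Real.rpow_nonneg (norm_nonneg _) _)
      (Finset.sum_nonneg fun j _ => norm_nonneg _) hq]
    exact sum_rpow_le_rpow_sum _ _ (fun _ => norm_nonneg _) hq1
end

section
/- Let n ≥ 2 and let (p₁,…,pₙ) satisfy 1/2 ≤ 1/p₁ + ⋯ + 1/pₙ < 1. A continuous n-linear operator T : E₁ × ⋯ × Eₙ → F between Banach spaces has type (p₁,…,pₙ) if and only if for every choice of sequences (x_j^{(i)})_{j=1}^∞ in E_i with ∑_{j=1}^∞ ‖x_j^{(i)}‖^{p_i} < ∞ for each i = 1,…,n, one has sup_{k ∈ ℕ} ‖(T(x_j^{(1)},…,x_j^{(n)}))_{j=1}^k‖_Rad < ∞. -/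
/-!
Finite families satisfying the type inequality control infinite sequences by comparing partial
sums with the full series, which gives the forward implication. The converse is a gliding hump
argument. If `T` does not have the type `p`, then failure of the inequality with a suitable
constant, together with multilinearity, yields for every `m` a finite block whose `i`-th family
satisfies `∑ ‖x‖ ^ pᵢ ≤ 2 ^ (-m pᵢ)` although its Rademacher average exceeds `m`
(`exists_large_block`). All the blocks are enumerated in one sequence: the bounds
`2 ^ (-m pᵢ)` are summable in `m`, and a partial Rademacher average of the concatenated sequence
dominates that of every block it contains (`radAvg_comp_le`), so these averages are unbounded.
-/


open scoped BigOperators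

/-- The Rademacher average `radNorm` for a family over an arbitrary finite index type. -/
noncomputable def radAvg {F ι : Type*} [NormedAddCommGroup F] [Fintype ι] [DecidableEq ι]
    (y : ι → F) : ℝ :=
  Real.sqrt (((2 : ℝ) ^ Fintype.card ι)⁻¹ *
    ∑ ε : ι → Bool, ‖∑ j, (if ε j then y j else -y j)‖ ^ 2)

lemma radNorm_eq_radAvg {F : Type*} [NormedAddCommGroup F] {k : ℕ} (y : Fin k → F) :
    radNorm y = radAvg y := by
  simp [radNorm, radAvg]

lemma radAvg_comp_equiv {F ι κ : Type*} [NormedAddCommGroup F] [Fintype ι] [DecidableEq ι]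
    [Fintype κ] [DecidableEq κ] (e : ι ≃ κ) (y : κ → F) : radAvg (y ∘ e) = radAvg y := by
  unfold radAvg
  rw [Fintype.card_congr e]
  congr 2
  refine Fintype.sum_equiv (e.arrowCongr (Equiv.refl Bool)) _ _ fun ε => ?_
  congr 2
  refine Fintype.sum_equiv e _ _ fun j => ?_
  simp [Equiv.arrowCongr]

/-- Pairing each choice of signs with its opposite: `a` is the average of `a + b` and `a - b`. -/
lemma card_mul_sq_norm_le {F κ : Type*} [NormedAddCommGroup F] [NormedSpace ℝ F] [Fintype κ] [DecidableEq κ]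
    (a : F) (z : κ → F) :
    (2 : ℝ) ^ Fintype.card κ * ‖a‖ ^ 2 ≤
      ∑ δ : κ → Bool, ‖a + ∑ j, (if δ j then z j else -z j)‖ ^ 2 := by
  set b : (κ → Bool) → F := fun δ => ∑ j, (if δ j then z j else -z j) with hb
  have hneg : ∑ δ, ‖a + b δ‖ ^ 2 = ∑ δ, ‖a - b δ‖ ^ 2 := by
    refine Fintype.sum_equiv (Equiv.arrowCongr (Equiv.refl κ) Equiv.boolNot) _ _ fun δ => ?_
    rw [sub_eq_add_neg]
    congr 3
    simp only [hb, ← Finset.sum_neg_distrib]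
    refine Finset.sum_congr rfl fun j _ => ?_
    cases h : δ j <;> simp [Equiv.arrowCongr, h]
  have hpt : ∀ δ, 2 * ‖a‖ ^ 2 ≤ ‖a + b δ‖ ^ 2 + ‖a - b δ‖ ^ 2 := by
    intro δ
    have h : 2 * ‖a‖ ≤ ‖a + b δ‖ + ‖a - b δ‖ := by
      have h2 := norm_add_le (a + b δ) (a - b δ)
      have h3 : (a + b δ) + (a - b δ) = (2 : ℝ) • a := by rw [two_smul]; abel
      rw [h3, norm_smul, Real.norm_ofNat] at h2
      exact h2
    nlinarith [sq_nonneg (‖a + b δ‖ - ‖a - b δ‖), norm_nonneg a]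
  have hsum := Finset.sum_le_sum fun δ (_ : δ ∈ Finset.univ) => hpt δ
  rw [Finset.sum_add_distrib, ← hneg, Finset.sum_const, Finset.card_univ, Fintype.card_fun,
    Fintype.card_bool, nsmul_eq_mul] at hsum
  push_cast at hsum
  linarith

/-- Restricting a family to a subset of its indices does not increase its Rademacher average. -/
lemma radAvg_comp_le {F ι κ : Type*} [NormedAddCommGroup F] [NormedSpace ℝ F] [Fintype ι]
    [DecidableEq ι] [Fintype κ] [DecidableEq κ] {f : ι → κ} (hf : Function.Injective f)
    (y : κ → F) : radAvg (y ∘ f) ≤ radAvg y := by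
  classical
  let e : ι ⊕ ↥(Set.range f)ᶜ ≃ κ :=
    ((Equiv.ofInjective f hf).sumCongr (Equiv.refl _)).trans (Equiv.Set.sumCompl (Set.range f))
  have he : ∀ i, e (Sum.inl i) = f i := fun i => by simp [e]
  rw [← radAvg_comp_equiv e y]
  refine Real.sqrt_le_sqrt ?_
  have key : (2 : ℝ) ^ Fintype.card ↥(Set.range f)ᶜ *
      ∑ ε : ι → Bool, ‖∑ j, (if ε j then (y ∘ f) j else -(y ∘ f) j)‖ ^ 2 ≤
      ∑ ε : (ι ⊕ ↥(Set.range f)ᶜ) → Bool, ‖∑ j, (if ε j then (y ∘ e) j else -(y ∘ e) j)‖ ^ 2 := by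
    rw [Fintype.sum_equiv (Equiv.sumArrowEquivProdArrow ι ↥(Set.range f)ᶜ Bool) _
      (fun q => ‖∑ j, (if q.1 j then (y ∘ f) j else -(y ∘ f) j) +
        ∑ j, (if q.2 j then y (e (Sum.inr j)) else -y (e (Sum.inr j)))‖ ^ 2)
      (fun ε => by simp [Fintype.sum_sum_type, he, Equiv.sumArrowEquivProdArrow]; rfl),
      Fintype.sum_prod_type, Finset.mul_sum]
    exact Finset.sum_le_sum fun ε _ => card_mul_sq_norm_le _ _
  rw [Fintype.card_sum, pow_add, mul_inv, mul_assoc]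
  gcongr
  rw [inv_mul_eq_div, le_div_iff₀ (by positivity), mul_comm]
  exact key

lemma radNorm_smul {𝕜 F : Type*} [RCLike 𝕜] [NormedAddCommGroup F] [NormedSpace 𝕜 F] {k : ℕ}
    (c : 𝕜) (y : Fin k → F) : radNorm (fun j => c • y j) = ‖c‖ * radNorm y := by
  unfold radNorm
  have h : ∀ ε : Fin k → Bool, ‖∑ j, (if ε j then c • y j else -(c • y j))‖ ^ 2 =
      ‖c‖ ^ 2 * ‖∑ j, (if ε j then y j else -y j)‖ ^ 2 := by
    intro ε
    rw [← mul_pow, ← norm_smul, Finset.smul_sum]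
    congr 2
    exact Finset.sum_congr rfl fun j _ => by split_ifs <;> simp
  simp_rw [h]
  rw [← Finset.mul_sum, mul_left_comm, Real.sqrt_mul (sq_nonneg _), Real.sqrt_sq (norm_nonneg _)]

/-- A single hump: failure of type `p` gives arbitrarily small blocks with arbitrarily large
Rademacher averages. -/
lemma exists_large_block {𝕜 : Type*} [RCLike 𝕜] {n : ℕ} {E : Fin n → Type*} {F : Type*}
    [∀ i, NormedAddCommGroup (E i)] [∀ i, NormedSpace 𝕜 (E i)]
    [NormedAddCommGroup F] [NormedSpace 𝕜 F] (p : Fin n → ℝ) (hp : ∀ i, 0 < p i)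
    (T : ContinuousMultilinearMap 𝕜 E F) (hT : ¬ HasType T p) (m : ℕ) :
    ∃ (k : ℕ) (x : ∀ i, Fin k → E i),
      (∀ i, ∑ j, ‖x i j‖ ^ p i ≤ ((1 / 2 : ℝ) ^ p i) ^ m) ∧
        (m : ℝ) < radNorm (fun j => T (fun i => x i j)) := by
  -- The factor `(2 ^ m) ^ n` compensates for scaling each of the `n` families by `2 ^ (-m)`.
  obtain ⟨k, x, hx⟩ : ∃ (k : ℕ) (x : ∀ i, Fin k → E i),
      ((2 : ℝ) ^ m) ^ n * (m + 1) * ∏ i, (∑ j, ‖x i j‖ ^ p i) ^ (1 / p i) <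
        radNorm (fun j => T (fun i => x i j)) := by
    by_contra! h
    exact hT ⟨((2 : ℝ) ^ m) ^ n * (m + 1), by positivity, fun k x => h k x⟩
  set S : Fin n → ℝ := fun i => ∑ j, ‖x i j‖ ^ p i with hS
  have hS0 : ∀ i, 0 ≤ S i := fun i => Finset.sum_nonneg fun j _ => by positivity
  -- If one family vanished, both sides of the violated inequality would be zero.
  have hSpos : ∀ i, 0 < S i := by
    intro i
    refine (hS0 i).lt_of_ne' fun h0 => ?_
    have hz : ∀ j, T (fun i => x i j) = 0 := by
      intro j
      have hj := (Finset.sum_eq_zero_iff_of_nonneg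
        (fun j _ => Real.rpow_nonneg (norm_nonneg (x i j)) (p i))).1 h0 j (Finset.mem_univ j)
      rw [Real.rpow_eq_zero (norm_nonneg _) (hp i).ne', norm_eq_zero] at hj
      exact T.map_coord_zero i hj
    have hr : radNorm (fun j => T (fun i => x i j)) = 0 := by simp [hz, radNorm]
    rw [hr] at hx
    have : 0 ≤ ∏ i, S i ^ (1 / p i) := Finset.prod_nonneg fun i _ => Real.rpow_nonneg (hS0 i) _
    exact absurd hx (not_lt.2 (by positivity))
  set c : Fin n → ℝ := fun i => (1 / 2 : ℝ) ^ m * (S i ^ (1 / p i))⁻¹ with hc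
  have hcpos : ∀ i, 0 < c i := fun i => by
    have := Real.rpow_pos_of_pos (hSpos i) (1 / p i)
    positivity
  refine ⟨k, fun i j => (c i : 𝕜) • x i j, fun i => ?_, ?_⟩
  · have hci : c i ^ p i * S i = ((1 / 2 : ℝ) ^ p i) ^ m := by
      rw [hc, Real.mul_rpow (by positivity) (inv_nonneg.2 (Real.rpow_nonneg (hS0 i) _)),
        Real.inv_rpow (Real.rpow_nonneg (hS0 i) _), ← Real.rpow_mul (hS0 i),
        one_div_mul_cancel (hp i).ne', Real.rpow_one, mul_assoc, inv_mul_cancel₀ (hSpos i).ne',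
        mul_one, ← Real.rpow_natCast, ← Real.rpow_natCast, ← Real.rpow_mul (by norm_num),
        ← Real.rpow_mul (by norm_num), mul_comm]
    rw [← hci, hS, Finset.mul_sum]
    refine Finset.sum_le_sum fun j _ => le_of_eq ?_
    rw [norm_smul, RCLike.norm_ofReal, abs_of_pos (hcpos i),
      Real.mul_rpow (hcpos i).le (norm_nonneg _)]
  · simp_rw [T.map_smul_univ]
    rw [radNorm_smul, norm_prod]
    simp_rw [RCLike.norm_ofReal, abs_of_pos (hcpos _)]
    have hP : 0 < ∏ i, S i ^ (1 / p i) :=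
      Finset.prod_pos fun i _ => Real.rpow_pos_of_pos (hSpos i) _
    have hprod : ∏ i, c i = (((2 : ℝ) ^ m) ^ n * ∏ i, S i ^ (1 / p i))⁻¹ := by
      rw [hc, Finset.prod_mul_distrib, Finset.prod_inv_distrib, Finset.prod_const,
        Finset.card_univ, Fintype.card_fin, mul_inv, one_div, inv_pow, inv_pow]
    rw [hprod, inv_mul_eq_div, lt_div_iff₀ (by positivity)]
    refine lt_of_le_of_lt ?_ hx
    have : 0 < ((2 : ℝ) ^ m) ^ n * ∏ i, S i ^ (1 / p i) := by positivity
    nlinarith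

/-- For `n ≥ 2` and `1/2 ≤ 1/p₁ + ⋯ + 1/pₙ < 1`, a continuous `n`-linear operator `T` has
type `(p₁,…,pₙ)` if and only if, for all sequences `(x_j⁽ⁱ⁾)_j` in `Eᵢ` with
`∑_j ‖x_j⁽ⁱ⁾‖^{pᵢ} < ∞` for each `i`, the partial Rademacher averages
`‖(T(x_j⁽¹⁾,…,x_j⁽ⁿ⁾))_{j=1}^k‖_Rad` are uniformly bounded in `k`. -/
theorem hasType_iff_sequences
    {𝕜 : Type*} [RCLike 𝕜] {n : ℕ} {E : Fin n → Type*} {F : Type*}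
    [∀ i, NormedAddCommGroup (E i)] [∀ i, NormedSpace 𝕜 (E i)] [∀ i, CompleteSpace (E i)]
    [NormedAddCommGroup F] [NormedSpace 𝕜 F] [CompleteSpace F]
    (hn : 2 ≤ n) (p : Fin n → ℝ) (hp : ∀ i, 0 < p i)
    (h₁ : (1 : ℝ) / 2 ≤ ∑ i, 1 / p i) (h₂ : ∑ i, 1 / p i < 1)
    (T : ContinuousMultilinearMap 𝕜 E F) :
    HasType T p ↔
      ∀ x : ∀ i, ℕ → E i, (∀ i, Summable (fun j => ‖x i j‖ ^ p i)) →
        ∃ C : ℝ, ∀ k : ℕ,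
          radNorm (fun j : Fin k => T (fun i => x i (j : ℕ))) ≤ C := by
  constructor
  · rintro ⟨C, hC, h⟩ x hx
    refine ⟨C * ∏ i, (∑' j, ‖x i j‖ ^ p i) ^ (1 / p i), fun k => ?_⟩
    refine (h k fun i j => x i j).trans ?_
    have hnn : ∀ i, 0 ≤ ∑ j : Fin k, ‖x i j‖ ^ p i :=
      fun i => Finset.sum_nonneg fun j _ => by positivity
    refine mul_le_mul_of_nonneg_left (Finset.prod_le_prod
      (fun i _ => Real.rpow_nonneg (hnn i) _) fun i _ => ?_) hC.le
    refine Real.rpow_le_rpow (hnn i) ?_ (one_div_nonneg.2 (hp i).le)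
    rw [Fin.sum_univ_eq_sum_range (fun j => ‖x i j‖ ^ p i) k]
    exact (hx i).sum_le_tsum _ fun j _ => by positivity
  · intro h
    by_contra hT
    let _ : NormedSpace ℝ F := NormedSpace.restrictScalars ℝ 𝕜 F
    choose k x hx hlarge using exists_large_block p hp T hT
    have hk : ∀ m, 0 < k m := by
      intro m
      by_contra! h0
      have : IsEmpty (Fin (k m)) := ⟨fun j => absurd j.2 (by omega)⟩
      have hm := hlarge m
      simp only [radNorm, Finset.univ_eq_empty, Finset.sum_empty] at hm
      have : (0 : ℝ) ≤ m := m.cast_nonneg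
      simp at hm
      linarith
    -- The disjoint union of all blocks is countably infinite; `e` lists it as one sequence.
    have : Infinite (Σ m, Fin (k m)) :=
      Infinite.of_injective (fun m => ⟨m, ⟨0, hk m⟩⟩) fun a b hab => congrArg Sigma.fst hab
    obtain ⟨hden⟩ := nonempty_denumerable (Σ m, Fin (k m))
    let e : (Σ m, Fin (k m)) ≃ ℕ := Denumerable.eqv _
    obtain ⟨C, hC⟩ := h (fun i N => x (e.symm N).1 i (e.symm N).2) (by
      intro i
      refine (e.symm.summable_iff (f := fun q : Σ m, Fin (k m) => ‖x q.1 i q.2‖ ^ p i)).2 ?_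
      refine (summable_sigma_of_nonneg fun q => by positivity).2 ⟨fun m => Summable.of_finite, ?_⟩
      refine Summable.of_nonneg_of_le (fun m => tsum_nonneg fun j => by positivity)
        (fun m => ?_) (summable_geometric_of_lt_one (Real.rpow_nonneg (by norm_num) _)
          (Real.rpow_lt_one (by norm_num) (by norm_num : (1 / 2 : ℝ) < 1) (hp i)))
      rw [tsum_fintype]
      exact hx m i)
    obtain ⟨m, hm⟩ := exists_nat_gt C
    obtain ⟨K, hK⟩ : ∃ K, ∀ j : Fin (k m), e ⟨m, j⟩ < K :=
      ⟨Finset.univ.sup (fun j : Fin (k m) => e ⟨m, j⟩) + 1, fun j =>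
        Nat.lt_succ_of_le (Finset.le_sup (f := fun j : Fin (k m) => e ⟨m, j⟩)
          (Finset.mem_univ j))⟩
    have hinj : Function.Injective (fun j : Fin (k m) => (⟨e ⟨m, j⟩, hK j⟩ : Fin K)) := by
      intro a b hab
      simpa using hab
    have hle := radAvg_comp_le hinj
      (fun N : Fin K => T (fun i => x (e.symm N).1 i (e.symm N).2))
    have hCK := hC K
    rw [radNorm_eq_radAvg] at hCK
    have hlm := hlarge m
    rw [radNorm_eq_radAvg] at hlm
    have heq : ((fun N : Fin K => T (fun i => x (e.symm N).1 i (e.symm N).2)) ∘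
        fun j : Fin (k m) => (⟨e ⟨m, j⟩, hK j⟩ : Fin K)) = fun j => T (fun i => x m i j) := by
      funext j
      simp only [Function.comp]
      rw [e.symm_apply_apply]
    rw [heq] at hle
    linarith
end

section
/- The continuous bilinear operator T : ℓ₁ × ℓ₁ → ℓ₁ defined by T((λ_j)_{j=1}^∞, (η_j)_{j=1}^∞) = (λ_j η_j)_{j=1}^∞ has no proper type: for every pair (p₁, p₂) with 1/2 ≤ 1/p₁ + 1/p₂ < 1, T does not have type (p₁, p₂). -/
/-!
The standard unit vectors `e_0, e_1, …` of `ℓ₁` witness the failure of type. The operator satisfies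
`T (e_j, e_j) = e_j`, and every signed sum `∑_{j < k} ± e_j` has `ℓ₁`-norm `k`, so the left-hand
side of the type inequality is at least `k` (`le_radNorm_of_le_norm_sum`), while its right-hand
side is `C * k ^ (1/p₁ + 1/p₂)`. As the exponent is less than `1`, this fails for large `k`.
-/

open scoped BigOperators

/-- If all signed sums have norm at least `a`, then so does their quadratic mean. -/
theorem le_radNorm_of_le_norm_sum {F : Type*} [NormedAddCommGroup F] {k : ℕ} (y : Fin k → F)
    {a : ℝ} (ha : 0 ≤ a)
    (h : ∀ ε : Fin k → Bool, a ≤ ‖∑ j, (if ε j then y j else -y j)‖) : a ≤ radNorm y := by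
  unfold radNorm
  apply Real.le_sqrt_of_sq_le
  have hsum : (2 : ℝ) ^ k * a ^ 2 ≤
      ∑ ε : Fin k → Bool, ‖∑ j, (if ε j then y j else -y j)‖ ^ 2 := by
    have := Finset.card_nsmul_le_sum (Finset.univ : Finset (Fin k → Bool))
      (fun ε => ‖∑ j, (if ε j then y j else -y j)‖ ^ 2) (a ^ 2)
      (fun ε _ => pow_le_pow_left₀ ha (h ε) 2)
    simpa using this
  rw [inv_mul_eq_div, le_div_iff₀ (by positivity)]
  linarith

theorem le_norm_signed_sum_single {𝕜 : Type*} [RCLike 𝕜] (k : ℕ) (ε : Fin k → Bool) :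
    (k : ℝ) ≤ ‖∑ j : Fin k, (if ε j then (lp.single 1 (j : ℕ) (1 : 𝕜) : lp (fun _ : ℕ => 𝕜) 1)
      else -lp.single 1 (j : ℕ) (1 : 𝕜))‖ := by
  set z := ∑ j : Fin k, (if ε j then (lp.single 1 (j : ℕ) (1 : 𝕜) : lp (fun _ : ℕ => 𝕜) 1)
      else -lp.single 1 (j : ℕ) (1 : 𝕜)) with hz
  have hcoord : ∀ i : Fin k, ‖z i‖ = 1 := by
    intro i
    have : z i = if ε i then 1 else -1 := by
      rw [hz, lp.coeFn_sum, Finset.sum_apply, Finset.sum_eq_single i]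
      · split_ifs <;> simp
      · intro j _ hj
        have hij : (i : ℕ) ≠ j := fun h => hj (Fin.ext h.symm)
        split_ifs <;> simp [hij]
      · simp
    rw [this]
    split_ifs <;> simp
  have h := lp.sum_rpow_le_norm_rpow (p := 1) (by simp) z (Finset.range k)
  rw [Finset.sum_range] at h
  simpa [hcoord] using h

/-- The continuous bilinear operator `T : ℓ₁ × ℓ₁ → ℓ₁` of coordinatewise multiplication
has no proper type: for every `(p₁, p₂)` with `1/2 ≤ 1/p₁ + 1/p₂ < 1`, `T` does not have
type `(p₁, p₂)`. -/
theorem diagonal_l1_no_type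
    {𝕜 : Type*} [RCLike 𝕜]
    (T : ContinuousMultilinearMap 𝕜 (fun _ : Fin 2 => lp (fun _ : ℕ => 𝕜) 1)
      (lp (fun _ : ℕ => 𝕜) 1))
    (hT : ∀ x : Fin 2 → lp (fun _ : ℕ => 𝕜) 1, ∀ j : ℕ, (T x) j = x 0 j * x 1 j)
    (p₁ p₂ : ℝ) (hp₁ : 0 < p₁) (hp₂ : 0 < p₂)
    (h₁ : (1 : ℝ) / 2 ≤ 1 / p₁ + 1 / p₂) (h₂ : 1 / p₁ + 1 / p₂ < 1) :
    ¬ HasType T ![p₁, p₂] := by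
  rintro ⟨C, -, hC⟩
  have hTe : ∀ j : ℕ, T (fun _ => lp.single 1 j (1 : 𝕜)) = lp.single 1 j (1 : 𝕜) := by
    intro j
    ext i
    rw [hT]
    by_cases hij : i = j
    · subst hij; simp
    · simp [hij]
  have key : ∀ k : ℕ, 0 < k → (k : ℝ) ≤ C * (k : ℝ) ^ (1 / p₁ + 1 / p₂) := by
    intro k hk
    have h := hC k (fun _ j => lp.single 1 (j : ℕ) (1 : 𝕜))
    simp only [hTe] at h
    refine (le_radNorm_of_le_norm_sum _ (Nat.cast_nonneg k)
      (le_norm_signed_sum_single k)).trans (h.trans_eq ?_)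
    rw [Real.rpow_add (by exact_mod_cast hk)]
    simp [Fin.prod_univ_two, lp.norm_single]
  -- Dividing by `k ^ (1/p₁ + 1/p₂)` bounds a positive power of `k` by `C`.
  have hlim : Filter.Tendsto (fun k : ℕ => (k : ℝ) ^ (1 - (1 / p₁ + 1 / p₂)))
      Filter.atTop Filter.atTop :=
    (tendsto_rpow_atTop (by linarith)).comp tendsto_natCast_atTop_atTop
  obtain ⟨k, hkC, hk⟩ := ((hlim.eventually_gt_atTop C).and (Filter.eventually_gt_atTop 0)).exists
  have hk' : (0 : ℝ) < k := by exact_mod_cast hk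
  rw [Real.rpow_sub hk', Real.rpow_one, lt_div_iff₀ (by positivity)] at hkC
  exact absurd (key k hk) (not_le.mpr hkC)
end

section
/- The continuous bilinear operator T : c₀ × c₀ → c₀ defined by T((λ_j)_{j=1}^∞, (η_j)_{j=1}^∞) = (λ_j η_j)_{j=1}^∞ has no cotype: for every 0 < q < ∞, T does not have cotype q. -/
/-!
Coordinatewise multiplication on `c₀` fixes each unit vector: `T (e j, e j) = e j`. Any signed sum of
the first `k` unit vectors has sup norm at most `1`, so `radNorm (e 0, …, e (k-1)) ≤ 1`
(`radNorm_unitVec_le`), whereas the `ℓ_q` sum of the norms `‖T (e j, e j)‖ ≥ 1` is at least `k ^ (1/q)`.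
A cotype `q` constant `M` would therefore satisfy `k ≤ M ^ q` for every `k`, which is absurd.
-/

open scoped BigOperators

open ZeroAtInfty in
/-- The unit vector `e m` of `c₀`, with value `1` at `m` and `0` elsewhere. -/
noncomputable def unitVec (𝕜 : Type*) [RCLike 𝕜] (m : ℕ) : C₀(ℕ, 𝕜) where
  toFun := fun i => if i = m then 1 else 0
  continuous_toFun := continuous_of_discreteTopology
  zero_at_infty' := by
    rw [Filter.cocompact_eq_cofinite, Nat.cofinite_eq_atTop]
    refine tendsto_const_nhds.congr' ?_
    filter_upwards [Filter.eventually_gt_atTop m] with i hi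
    rw [if_neg hi.ne']

theorem unitVec_apply (𝕜 : Type*) [RCLike 𝕜] (m i : ℕ) :
    unitVec 𝕜 m i = if i = m then 1 else 0 := rfl

open ZeroAtInfty in
theorem norm_apply_le_norm {𝕜 : Type*} [RCLike 𝕜] (f : C₀(ℕ, 𝕜)) (i : ℕ) : ‖f i‖ ≤ ‖f‖ :=
  f.toBCF.norm_coe_le_norm i

open ZeroAtInfty in
theorem norm_le_of_apply_le {𝕜 : Type*} [RCLike 𝕜] (f : C₀(ℕ, 𝕜)) {C : ℝ} (hC : 0 ≤ C)
    (h : ∀ i, ‖f i‖ ≤ C) : ‖f‖ ≤ C :=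
  (BoundedContinuousFunction.norm_le (f := f.toBCF) hC).2 h

/-- Signed sums of distinct unit vectors lie in the unit ball, since at each coordinate at most one
summand is nonzero. -/
theorem norm_signed_sum_unitVec_le (𝕜 : Type*) [RCLike 𝕜] {k : ℕ} (ε : Fin k → Bool) :
    ‖∑ j : Fin k, (if ε j then unitVec 𝕜 j else -unitVec 𝕜 j)‖ ≤ 1 := by
  refine norm_le_of_apply_le _ zero_le_one fun i => ?_
  let ev : ZeroAtInftyContinuousMap ℕ 𝕜 →+ 𝕜 := ⟨⟨fun f => f i, rfl⟩, fun _ _ => rfl⟩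
  have hev : (∑ j : Fin k, (if ε j then unitVec 𝕜 j else -unitVec 𝕜 j)) i
      = ∑ j : Fin k, if i = j then (if ε j then (1 : 𝕜) else -1) else 0 := by
    refine (map_sum ev _ _).trans (Finset.sum_congr rfl fun j _ => ?_)
    change (if ε j then unitVec 𝕜 j else -unitVec 𝕜 j) i = _
    by_cases hε : ε j <;> by_cases hi : i = j <;> simp [hε, hi, unitVec_apply]
  rw [hev]
  by_cases hi : i < k
  · rw [Finset.sum_eq_single (⟨i, hi⟩ : Fin k)]
    · by_cases hε : ε ⟨i, hi⟩ <;> simp [hε]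
    · intro j _ hj
      exact if_neg fun h => hj (Fin.ext h.symm)
    · simp
  · rw [Finset.sum_eq_zero]
    · simp
    · intro j _
      exact if_neg fun h : i = j => hi (h ▸ j.isLt)

theorem radNorm_unitVec_le (𝕜 : Type*) [RCLike 𝕜] (k : ℕ) :
    radNorm (fun j : Fin k => unitVec 𝕜 j) ≤ 1 := by
  rw [radNorm, Real.sqrt_le_one, inv_mul_le_one₀ (by positivity)]
  refine (Finset.sum_le_card_nsmul _ _ 1 fun ε _ => ?_).trans (by simp)
  exact pow_le_one₀ (norm_nonneg _) (norm_signed_sum_unitVec_le 𝕜 ε)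

open ZeroAtInfty in
/-- The continuous bilinear operator `T : c₀ × c₀ → c₀` of coordinatewise multiplication
has no cotype: for every `0 < q < ∞`, `T` does not have cotype `q`. -/
theorem diagonal_c0_no_cotype
    {𝕜 : Type*} [RCLike 𝕜]
    (T : ContinuousMultilinearMap 𝕜 (fun _ : Fin 2 => C₀(ℕ, 𝕜)) C₀(ℕ, 𝕜))
    (hT : ∀ x : Fin 2 → C₀(ℕ, 𝕜), ∀ j : ℕ, (T x) j = x 0 j * x 1 j)
    (q : ℝ) (hq : 0 < q) :
    ¬ HasCotype T q := by
  rintro ⟨M, hM, h⟩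
  obtain ⟨k, hk⟩ := exists_nat_gt (M ^ q)
  have key := h k (fun _ j => unitVec 𝕜 j)
  have hnorm : ∀ j : Fin k, 1 ≤ ‖T (fun _ => unitVec 𝕜 j)‖ := fun j => by
    simpa [hT, unitVec_apply] using norm_apply_le_norm (T (fun _ => unitVec 𝕜 j)) j
  have hsum : (k : ℝ) ≤ ∑ j : Fin k, ‖T (fun _ => unitVec 𝕜 j)‖ ^ q := by
    simpa using Finset.card_nsmul_le_sum Finset.univ _ (1 : ℝ)
      fun j _ => Real.one_le_rpow (hnorm j) hq.le
  have hprod : ∏ _i : Fin 2, radNorm (fun j : Fin k => unitVec 𝕜 j) ≤ 1 :=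
    Finset.prod_le_one (fun _ _ => Real.sqrt_nonneg _) fun _ _ => radNorm_unitVec_le 𝕜 k
  have hle : (k : ℝ) ^ (1 / q) ≤ M :=
    (Real.rpow_le_rpow k.cast_nonneg hsum (by positivity)).trans
      (key.trans (mul_le_of_le_one_right hM.le hprod))
  rw [one_div, Real.rpow_inv_le_iff_of_pos k.cast_nonneg hM.le hq] at hle
  exact absurd hle hk.not_ge
end

section
/- Let (p₁,…,pₙ) satisfy 1/2 ≤ 1/p₁ + ⋯ + 1/pₙ < 1 and let 1 ≤ p ≤ 2 satisfy 1/p ≤ 1/p₁ + ⋯ + 1/pₙ. If B : E₁ × ⋯ × Eₙ → G is a continuous n-linear operator between Banach spaces and u : G → F is a bounded linear operator of type p with constant C, then T = u ∘ B has type (p₁,…,pₙ) with constant at most C · ‖B‖. -/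
/-!
Since `u` has type `p₀`, everything reduces to the estimate
`(∑ⱼ ‖B(xⱼ)‖ ^ p₀) ^ (1 / p₀) ≤ ‖B‖ * ∏ᵢ (∑ⱼ ‖xᵢⱼ‖ ^ pᵢ) ^ (1 / pᵢ)`. The pointwise bound
`‖B(xⱼ)‖ ≤ ‖B‖ * ∏ᵢ ‖xᵢⱼ‖` reduces it to `holder_prod_le`, which
combines the generalized Hölder inequality with exponent `1 / r = ∑ᵢ 1 / pᵢ` and the inclusion of
`ℓ_r` in `ℓ_{p₀}` for `r ≤ p₀`. After normalizing each factor in `ℓ_{pᵢ}` (`sum_normalized_le_one`), both follow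
from the weighted AM-GM inequality with weights `r / pᵢ` and from all the terms being at most `1`.

The type constant `C` may be negative only if the domain of `u` is trivial, in which case
`B = 0` and both sides vanish.
-/

open scoped BigOperators

/-- Hölder's inequality in normalized form: if each nonnegative family `b i` has sum at most `1`,
the products
`∏ i, b i j ^ (1 / p i)` have `ℓ_q` norm at most `1`, for every `q ≥ 1 / ∑ i, 1 / p i`. -/
theorem sum_normalized_le_one {n k : ℕ} (p : Fin n → ℝ) (hp : ∀ i, 0 < p i)
    (hs : 0 < ∑ i, 1 / p i) (q : ℝ) (hq : 1 / ∑ i, 1 / p i ≤ q)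
    (b : Fin n → Fin k → ℝ) (hb : ∀ i j, 0 ≤ b i j) (hb1 : ∀ i, ∑ j, b i j ≤ 1) :
    ∑ j, (∏ i, b i j ^ (1 / p i)) ^ q ≤ 1 := by
  set s := ∑ i, 1 / p i with hsdef
  have hw : ∑ i, 1 / p i / s = 1 := by
    rw [← Finset.sum_div, ← hsdef, div_self hs.ne']
  have hw0 : ∀ i, 0 ≤ 1 / p i / s := fun i => by have := hp i; positivity
  have hle : ∀ i j, b i j ≤ 1 := fun i j =>
    (Finset.single_le_sum (f := b i) (fun j _ => hb i j) (Finset.mem_univ j)).trans (hb1 i)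
  have hterm : ∀ j, (∏ i, b i j ^ (1 / p i)) ^ q ≤ ∑ i, 1 / p i / s * b i j := by
    intro j
    have h0 : 0 ≤ ∏ i, b i j ^ (1 / p i) :=
      Finset.prod_nonneg fun i _ => Real.rpow_nonneg (hb i j) _
    have h1 : ∏ i, b i j ^ (1 / p i) ≤ 1 :=
      Finset.prod_le_one (fun i _ => Real.rpow_nonneg (hb i j) _) fun i _ =>
        Real.rpow_le_one (hb i j) (hle i j) (by have := hp i; positivity)
    calc (∏ i, b i j ^ (1 / p i)) ^ q ≤ (∏ i, b i j ^ (1 / p i)) ^ (1 / s) :=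
          Real.rpow_le_rpow_of_exponent_ge_of_imp h0 h1 hq
            (fun _ h => absurd h ((one_div_pos.2 hs).trans_le hq).ne')
      _ = ∏ i, b i j ^ (1 / p i / s) := by
          rw [← Real.finsetProd_rpow _ _ fun i _ => Real.rpow_nonneg (hb i j) _]
          refine Finset.prod_congr rfl fun i _ => ?_
          rw [← Real.rpow_mul (hb i j), mul_one_div]
      _ ≤ ∑ i, 1 / p i / s * b i j :=
          Real.geom_mean_le_arith_mean_weighted _ _ _ (fun i _ => hw0 i) hw fun i _ => hb i j
  calc ∑ j, (∏ i, b i j ^ (1 / p i)) ^ q ≤ ∑ j, ∑ i, 1 / p i / s * b i j :=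
        Finset.sum_le_sum fun j _ => hterm j
    _ = ∑ i, 1 / p i / s * ∑ j, b i j := by
        rw [Finset.sum_comm]
        simp only [Finset.mul_sum]
    _ ≤ ∑ i, 1 / p i / s * 1 :=
        Finset.sum_le_sum fun i _ => mul_le_mul_of_nonneg_left (hb1 i) (hw0 i)
    _ = 1 := by simpa using hw

/-- Generalized Hölder inequality for finite families, with an exponent `q` on the left that is
at least the Hölder exponent `1 / ∑ i, 1 / p i`. -/
theorem holder_prod_le {n k : ℕ} (p : Fin n → ℝ) (hp : ∀ i, 0 < p i)
    (hs : 0 < ∑ i, 1 / p i) (q : ℝ) (hq0 : 0 < q) (hq : 1 / ∑ i, 1 / p i ≤ q)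
    (a : Fin n → Fin k → ℝ) (ha : ∀ i j, 0 ≤ a i j) :
    (∑ j, (∏ i, a i j) ^ q) ^ (1 / q) ≤ ∏ i, (∑ j, a i j ^ p i) ^ (1 / p i) := by
  set S : Fin n → ℝ := fun i => ∑ j, a i j ^ p i with hS
  have hS0 : ∀ i, 0 ≤ S i := fun i => Finset.sum_nonneg fun j _ => Real.rpow_nonneg (ha i j) _
  have hP0 : 0 ≤ ∏ i, S i ^ (1 / p i) :=
    Finset.prod_nonneg fun i _ => Real.rpow_nonneg (hS0 i) _
  have hb : ∀ i j, 0 ≤ a i j ^ p i / S i := fun i j =>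
    div_nonneg (Real.rpow_nonneg (ha i j) _) (hS0 i)
  have hnorm := sum_normalized_le_one p hp hs q hq (fun i j => a i j ^ p i / S i) hb
    (fun i => by
      rw [← Finset.sum_div]
      exact div_self_le_one _)
  -- If `S i = 0`, the quotient is the junk value `0`, but then `a i j = 0` as well.
  have hfac : ∀ i j, a i j = S i ^ (1 / p i) * (a i j ^ p i / S i) ^ (1 / p i) := by
    intro i j
    have hcancel : S i * (a i j ^ p i / S i) = a i j ^ p i := by
      refine mul_div_cancel_of_imp' fun h => ?_
      exact (Finset.sum_eq_zero_iff_of_nonneg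
        (fun j _ => Real.rpow_nonneg (ha i j) _)).1 h j (Finset.mem_univ j)
    rw [← Real.mul_rpow (hS0 i) (hb i j), hcancel, ← Real.rpow_mul (ha i j),
      mul_one_div_cancel (hp i).ne', Real.rpow_one]
  have hsum : ∑ j, (∏ i, a i j) ^ q ≤ (∏ i, S i ^ (1 / p i)) ^ q := by
    calc ∑ j, (∏ i, a i j) ^ q
        = (∏ i, S i ^ (1 / p i)) ^ q * ∑ j, (∏ i, (a i j ^ p i / S i) ^ (1 / p i)) ^ q := by
          rw [Finset.mul_sum]
          refine Finset.sum_congr rfl fun j _ => ?_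
          rw [← Real.mul_rpow hP0 (Finset.prod_nonneg fun i _ => Real.rpow_nonneg (hb i j) _),
            ← Finset.prod_mul_distrib, Finset.prod_congr rfl fun i _ => hfac i j]
      _ ≤ (∏ i, S i ^ (1 / p i)) ^ q :=
          mul_le_of_le_one_right (Real.rpow_nonneg hP0 _) hnorm
  calc (∑ j, (∏ i, a i j) ^ q) ^ (1 / q) ≤ ((∏ i, S i ^ (1 / p i)) ^ q) ^ (1 / q) :=
        Real.rpow_le_rpow (Finset.sum_nonneg fun j _ =>
          Real.rpow_nonneg (Finset.prod_nonneg fun i _ => ha i j) _) hsum (by positivity)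
    _ = ∏ i, S i ^ (1 / p i) := by
        rw [← Real.rpow_mul hP0, mul_one_div_cancel hq0.ne', Real.rpow_one]

/-- If `(p₁,…,pₙ)` is a proper type, `1 ≤ p ≤ 2` with `1/p ≤ 1/p₁ + ⋯ + 1/pₙ`,
`B : E₁ × ⋯ × Eₙ → G` is a continuous `n`-linear operator and `u : G → F` is a bounded
linear operator of type `p` with constant `C`, then `T = u ∘ B` has type `(p₁,…,pₙ)` with
constant at most `C · ‖B‖`. -/
theorem comp_type
    {𝕜 : Type*} [RCLike 𝕜] {n : ℕ} {E : Fin n → Type*} {G F : Type*}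
    [∀ i, NormedAddCommGroup (E i)] [∀ i, NormedSpace 𝕜 (E i)] [∀ i, CompleteSpace (E i)]
    [NormedAddCommGroup G] [NormedSpace 𝕜 G] [CompleteSpace G]
    [NormedAddCommGroup F] [NormedSpace 𝕜 F] [CompleteSpace F]
    (p : Fin n → ℝ) (hp : ∀ i, 0 < p i)
    (h₁ : (1 : ℝ) / 2 ≤ ∑ i, 1 / p i) (h₂ : ∑ i, 1 / p i < 1)
    (p₀ : ℝ) (hp₀₁ : 1 ≤ p₀) (hp₀₂ : p₀ ≤ 2) (hp₀ : 1 / p₀ ≤ ∑ i, 1 / p i)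
    (B : ContinuousMultilinearMap 𝕜 E G) (u : G →L[𝕜] F) (C : ℝ)
    (hu : LinHasTypeWith u p₀ C) :
    HasTypeWith (u.compContinuousMultilinearMap B) p (C * ‖B‖) := by
  intro k x
  have hq0 : 0 < p₀ := by linarith
  have hs : 0 < ∑ i, 1 / p i := by linarith
  have hq : 1 / ∑ i, 1 / p i ≤ p₀ := (one_div_le hq0 hs).1 hp₀
  have hmain := hu k fun j => B fun i => x i j
  have hL0 : 0 ≤ (∑ j, ‖B fun i => x i j‖ ^ p₀) ^ (1 / p₀) := by positivity
  refine (show radNorm (fun j => u.compContinuousMultilinearMap B fun i => x i j) ≤ _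
    from hmain).trans ?_
  rcases lt_or_ge C 0 with hC | hC
  · -- Type `p₀` tested on a single vector forces `G` to be trivial.
    have hG : ∀ g : G, g = 0 := by
      intro g
      have h := (Real.sqrt_nonneg _).trans (hu 1 fun _ => g)
      rw [Fin.sum_univ_one, ← Real.rpow_mul (norm_nonneg g), mul_one_div_cancel hq0.ne',
        Real.rpow_one] at h
      exact norm_le_zero_iff.1 (nonpos_of_mul_nonneg_right h hC)
    have hB : B = 0 := ContinuousMultilinearMap.ext fun m => hG _
    rw [hB, norm_zero, mul_zero, zero_mul]
    exact mul_nonpos_of_nonpos_of_nonneg hC.le (by positivity)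
  · rw [mul_assoc]
    refine mul_le_mul_of_nonneg_left ?_ hC
    have hprod0 : ∀ j, 0 ≤ ∏ i, ‖x i j‖ := fun j => Finset.prod_nonneg fun i _ => norm_nonneg _
    calc (∑ j, ‖B fun i => x i j‖ ^ p₀) ^ (1 / p₀)
        ≤ (∑ j, (‖B‖ * ∏ i, ‖x i j‖) ^ p₀) ^ (1 / p₀) := by
          gcongr with j
          exact B.le_opNorm _
      _ = ‖B‖ * (∑ j, (∏ i, ‖x i j‖) ^ p₀) ^ (1 / p₀) := by
          simp only [Real.mul_rpow (norm_nonneg B) (hprod0 _)]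
          rw [← Finset.mul_sum, Real.mul_rpow (by positivity) (by positivity),
            ← Real.rpow_mul (norm_nonneg B), mul_one_div_cancel hq0.ne', Real.rpow_one]
      _ ≤ ‖B‖ * ∏ i, (∑ j, ‖x i j‖ ^ p i) ^ (1 / p i) :=
          mul_le_mul_of_nonneg_left
            (holder_prod_le p hp hs p₀ hq0 hq _ fun i j => norm_nonneg (x i j)) (norm_nonneg B)
end

section
/- Let q, q₁,…,qₙ > 0 satisfy 1/q ≤ 1/q₁ + ⋯ + 1/qₙ. If u_i : E_i → G_i is a bounded linear operator of cotype q_i with constant C_i (i = 1,…,n) and B : G₁ × ⋯ × Gₙ → F is a continuous n-linear operator between Banach spaces, then the n-linear operator T = B ∘ (u₁,…,uₙ) : E₁ × ⋯ × Eₙ → F, (x₁,…,xₙ) ↦ B(u₁x₁,…,uₙxₙ), has cotype q with constant at most ‖B‖ · C₁ ⋯ Cₙ. -/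
/-!
The pointwise bound `‖B (u₁ x₁, …, uₙ xₙ)‖ ≤ ‖B‖ ∏ ‖uᵢ xᵢ‖` reduces the claim to Hölder's inequality
for `n` factors with exponents satisfying `1/q ≤ ∑ 1/qᵢ` (`holder_of_inv_le_sum_inv`); the cotype
inequality of each `uᵢ` then bounds the factors one at a time. Strict inequality of the exponents
costs nothing because the normalised factors are at most `1`, so that lowering an exponent only
increases them; the weighted AM-GM inequality with weights proportional to `1/qᵢ` finishes.
-/

open scoped BigOperators

/-- Hölder's inequality for finite families with `1/q ≤ ∑ 1/qᵢ`, normalised case: here `y i j`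
stands for `(a i j) ^ qᵢ / ∑ j, (a i j) ^ qᵢ`. -/
lemma sum_prod_rpow_le_one {ι κ : Type*} [Fintype ι] [Fintype κ] {q : ℝ} (hq : 0 < q)
    {p : ι → ℝ} (hp : ∀ i, 0 < p i) (hsum : 1 / q ≤ ∑ i, 1 / p i)
    (y : ι → κ → ℝ) (hy0 : ∀ i j, 0 ≤ y i j) (hy1 : ∀ i, ∑ j, y i j = 1) :
    ∑ j, (∏ i, y i j ^ (1 / p i)) ^ q ≤ 1 := by
  set s : ℝ := ∑ i, 1 / p i with hs
  have hspos : 0 < s := lt_of_lt_of_le (by positivity) hsum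
  have hqs : 1 / s ≤ q := by
    rw [div_le_iff₀ hspos]
    rwa [div_le_iff₀' hq] at hsum
  have hw : ∑ i, 1 / p i * (1 / s) = 1 := by
    rw [← Finset.sum_mul, ← hs, mul_one_div_cancel hspos.ne']
  have hyle : ∀ i j, y i j ≤ 1 := fun i j => by
    rw [← hy1 i]
    exact Finset.single_le_sum (fun j _ => hy0 i j) (Finset.mem_univ j)
  have key : ∀ j, (∏ i, y i j ^ (1 / p i)) ^ q ≤ ∑ i, 1 / p i * (1 / s) * y i j := fun j => by
    have h0 : ∀ i, 0 ≤ y i j ^ (1 / p i) := fun i => Real.rpow_nonneg (hy0 i j) _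
    calc (∏ i, y i j ^ (1 / p i)) ^ q
        ≤ (∏ i, y i j ^ (1 / p i)) ^ (1 / s) :=
          Real.rpow_le_rpow_of_exponent_ge_of_imp (Finset.prod_nonneg fun i _ => h0 i)
            (Finset.prod_le_one (fun i _ => h0 i) fun i _ =>
              Real.rpow_le_one (hy0 i j) (hyle i j) (one_div_pos.2 (hp i)).le)
            hqs (fun _ h => absurd h hq.ne')
      _ = ∏ i, y i j ^ (1 / p i * (1 / s)) := by
          rw [← Real.finsetProd_rpow _ _ fun i _ => h0 i]
          exact Finset.prod_congr rfl fun i _ => (Real.rpow_mul (hy0 i j) _ _).symm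
      _ ≤ ∑ i, 1 / p i * (1 / s) * y i j :=
          Real.geom_mean_le_arith_mean_weighted _ _ _
            (fun i _ => mul_nonneg (one_div_pos.2 (hp i)).le (one_div_pos.2 hspos).le) hw
            (fun i _ => hy0 i j)
  calc ∑ j, (∏ i, y i j ^ (1 / p i)) ^ q
      ≤ ∑ j, ∑ i, 1 / p i * (1 / s) * y i j := Finset.sum_le_sum fun j _ => key j
    _ = 1 := by
      rw [Finset.sum_comm]
      refine Eq.trans ?_ hw
      exact Finset.sum_congr rfl fun i _ => by rw [← Finset.mul_sum, hy1 i, mul_one]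

/-- Hölder's inequality for finite families with finitely many factors, whose exponents satisfy
`1/q ≤ ∑ 1/qᵢ` only. -/
lemma holder_of_inv_le_sum_inv {ι κ : Type*} [Fintype ι] [Fintype κ] {q : ℝ} (hq : 0 < q)
    {p : ι → ℝ} (hp : ∀ i, 0 < p i) (hsum : 1 / q ≤ ∑ i, 1 / p i)
    (a : ι → κ → ℝ) (ha : ∀ i j, 0 ≤ a i j) :
    (∑ j, (∏ i, a i j) ^ q) ^ (1 / q) ≤ ∏ i, (∑ j, a i j ^ p i) ^ (1 / p i) := by
  have hap : ∀ i j, 0 ≤ a i j ^ p i := fun i j => Real.rpow_nonneg (ha i j) _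
  have hS0 : ∀ i, 0 ≤ ∑ j, a i j ^ p i := fun i => Finset.sum_nonneg fun j _ => hap i j
  have hA0 : 0 ≤ ∏ i, (∑ j, a i j ^ p i) ^ (1 / p i) :=
    Finset.prod_nonneg fun i _ => Real.rpow_nonneg (hS0 i) _
  by_cases hS : ∃ i, ∑ j, a i j ^ p i = 0
  · -- Normalisation is impossible here, but all products `∏ i, a i j` vanish.
    obtain ⟨i, hi⟩ := hS
    have hz : ∀ j, ∏ i, a i j = 0 := fun j => by
      have h := (Finset.sum_eq_zero_iff_of_nonneg fun j _ => hap i j).1 hi j (Finset.mem_univ j)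
      exact Finset.prod_eq_zero (Finset.mem_univ i)
        ((Real.rpow_eq_zero (ha i j) (hp i).ne').1 h)
    simpa [hz, Real.zero_rpow hq.ne', Real.zero_rpow (inv_pos.2 hq).ne'] using hA0
  · push Not at hS
    have hSpos : ∀ i, 0 < ∑ j, a i j ^ p i := fun i => (hS0 i).lt_of_ne' (hS i)
    set A := ∏ i, (∑ j, a i j ^ p i) ^ (1 / p i) with hA
    let y : ι → κ → ℝ := fun i j => a i j ^ p i / ∑ j, a i j ^ p i
    have hy0 : ∀ i j, 0 ≤ y i j := fun i j => div_nonneg (hap i j) (hS0 i)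
    have hfac : ∀ j, ∏ i, a i j = (∏ i, y i j ^ (1 / p i)) * A := fun j => by
      rw [hA, ← Finset.prod_mul_distrib]
      refine Finset.prod_congr rfl fun i _ => ?_
      rw [← Real.mul_rpow (hy0 i j) (hS0 i), div_mul_cancel₀ _ (hS i), one_div,
        Real.rpow_rpow_inv (ha i j) (hp i).ne']
    have hle : ∑ j, (∏ i, a i j) ^ q ≤ A ^ q := by
      have h1 := sum_prod_rpow_le_one hq hp hsum y hy0
        fun i => by rw [← Finset.sum_div, div_self (hS i)]
      calc ∑ j, (∏ i, a i j) ^ q = (∑ j, (∏ i, y i j ^ (1 / p i)) ^ q) * A ^ q := by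
            rw [Finset.sum_mul]
            refine Finset.sum_congr rfl fun j _ => ?_
            rw [hfac j, Real.mul_rpow
              (Finset.prod_nonneg fun i _ => Real.rpow_nonneg (hy0 i j) _) hA0]
        _ ≤ A ^ q := mul_le_of_le_one_left (Real.rpow_nonneg hA0 _) h1
    calc (∑ j, (∏ i, a i j) ^ q) ^ (1 / q) ≤ (A ^ q) ^ (1 / q) :=
          Real.rpow_le_rpow (Finset.sum_nonneg fun j _ =>
            Real.rpow_nonneg (Finset.prod_nonneg fun i _ => ha i j) _) hle (one_div_pos.2 hq).le
      _ = A := by rw [one_div, Real.rpow_rpow_inv hA0 hq.ne']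

/-- If `1/q ≤ 1/q₁ + ⋯ + 1/qₙ`, each `uᵢ : Eᵢ → Gᵢ` is a bounded linear operator of
cotype `qᵢ` with constant `Cᵢ` and `B : G₁ × ⋯ × Gₙ → F` is a continuous `n`-linear
operator, then `T = B ∘ (u₁,…,uₙ)` has cotype `q` with constant at most `‖B‖ · C₁ ⋯ Cₙ`. -/
theorem factorization_cotype
    {𝕜 : Type*} [RCLike 𝕜] {n : ℕ} {E G : Fin n → Type*} {F : Type*}
    [∀ i, NormedAddCommGroup (E i)] [∀ i, NormedSpace 𝕜 (E i)] [∀ i, CompleteSpace (E i)]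
    [∀ i, NormedAddCommGroup (G i)] [∀ i, NormedSpace 𝕜 (G i)] [∀ i, CompleteSpace (G i)]
    [NormedAddCommGroup F] [NormedSpace 𝕜 F] [CompleteSpace F]
    (q : ℝ) (hq : 0 < q) (qq : Fin n → ℝ) (hqq : ∀ i, 0 < qq i)
    (hsum : 1 / q ≤ ∑ i, 1 / qq i)
    (u : ∀ i, E i →L[𝕜] G i) (C : Fin n → ℝ)
    (hu : ∀ i, LinHasCotypeWith (u i) (qq i) (C i))
    (B : ContinuousMultilinearMap 𝕜 G F) :
    HasCotypeWith (B.compContinuousLinearMap u) q (‖B‖ * ∏ i, C i) := by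
  intro k x
  have hN : ∀ i j, 0 ≤ ‖u i (x i j)‖ := fun i j => norm_nonneg _
  have hP : ∀ j, 0 ≤ ∏ i, ‖u i (x i j)‖ := fun j => Finset.prod_nonneg fun i _ => hN i j
  have hsum0 : 0 ≤ ∑ j, (∏ i, ‖u i (x i j)‖) ^ q :=
    Finset.sum_nonneg fun j _ => Real.rpow_nonneg (hP j) _
  calc (∑ j, ‖B.compContinuousLinearMap u (fun i => x i j)‖ ^ q) ^ (1 / q)
      ≤ (∑ j, (‖B‖ * ∏ i, ‖u i (x i j)‖) ^ q) ^ (1 / q) := by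
        refine Real.rpow_le_rpow (Finset.sum_nonneg fun j _ => by positivity)
          (Finset.sum_le_sum fun j _ => ?_) (one_div_pos.2 hq).le
        exact Real.rpow_le_rpow (norm_nonneg _) (B.le_opNorm fun i => u i (x i j)) hq.le
    _ = ‖B‖ * (∑ j, (∏ i, ‖u i (x i j)‖) ^ q) ^ (1 / q) := by
        simp_rw [fun j => Real.mul_rpow (z := q) (norm_nonneg B) (hP j)]
        rw [← Finset.mul_sum, Real.mul_rpow (by positivity) hsum0, one_div,
          Real.rpow_rpow_inv (norm_nonneg B) hq.ne']
    _ ≤ ‖B‖ * ∏ i, (∑ j, ‖u i (x i j)‖ ^ qq i) ^ (1 / qq i) :=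
        mul_le_mul_of_nonneg_left
          (holder_of_inv_le_sum_inv hq hqq hsum (fun i j => ‖u i (x i j)‖) hN) (norm_nonneg B)
    -- The `C i` may be negative, but each `C i * radNorm (x i)` dominates a nonnegative number,
    -- so the bounds can be multiplied.
    _ ≤ ‖B‖ * ∏ i, (C i * radNorm (x i)) :=
        mul_le_mul_of_nonneg_left
          (Finset.prod_le_prod (fun i _ => by positivity) fun i _ => hu i k (x i)) (norm_nonneg B)
    _ = ‖B‖ * (∏ i, C i) * ∏ i, radNorm (x i) := by rw [Finset.prod_mul_distrib, mul_assoc]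
end

section
/- Let n ≥ 2, let 1 < r₁ ≤ 2, and let E be a Banach space that does not have type r₁. Consider the continuous n-linear form T : E × E' × 𝕂^{n-2} → 𝕂 defined by T(x, φ, λ₁,…,λ_{n-2}) = λ₁ ⋯ λ_{n-2} φ(x). Then T has every type (p₁,…,pₙ) with 1/2 ≤ 1/p₁ + ⋯ + 1/pₙ < 1, but the bounded linear operator I₁(T) : E → L(E', 𝕂,…,𝕂; 𝕂) defined by I₁(T)(x)(φ, λ₁,…,λ_{n-2}) = T(x, φ, λ₁,…,λ_{n-2}) (which satisfies ‖I₁(T)(x)‖ = ‖x‖ for all x ∈ E) does not have type r₁. -/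
/-!
For scalars the Rademacher average is exactly the `ℓ²` norm (parallelogram law), and
`|T v| ≤ ‖T‖ ∏ ‖v i‖`. So `T` has type `p` as soon as
`∑_j ∏_i a_{ij}² ≤ ∏_i ‖a_i‖_{p_i}²` for nonnegative `a`. This is Hölder's inequality combined with
`ℓ^r ⊆ ℓ²`, where `1 / r = ∑ 1 / p_i` and `r ≤ 2`.

On the other side, `I₁(T)` is isometric: `|T (x, φ, λ)| ≤ ‖x‖ ‖φ‖ ∏ |λ_j|`, and equality is attained
at a norming functional `φ` of `x` and `λ = 1`. A linear isometry has the type `r₁` only if its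
domain does.
-/

open scoped BigOperators

universe u

section Stmt17

variable (𝕜 : Type u) [RCLike 𝕜] (E : Type u) [NormedAddCommGroup E] [NormedSpace 𝕜 E] (m : ℕ)

/-- The domain family `E, E', 𝕜, …, 𝕜` (of length `n = m + 2`). -/
noncomputable def Efam : Fin (m + 2) → Type u
  | ⟨0, _⟩ => E
  | ⟨1, _⟩ => E →L[𝕜] 𝕜
  | ⟨_ + 2, _⟩ => 𝕜

noncomputable instance EfamNACG : ∀ i, NormedAddCommGroup (Efam 𝕜 E m i)
  | ⟨0, _⟩ => inferInstanceAs (NormedAddCommGroup E)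
  | ⟨1, _⟩ => inferInstanceAs (NormedAddCommGroup (E →L[𝕜] 𝕜))
  | ⟨_ + 2, _⟩ => inferInstanceAs (NormedAddCommGroup 𝕜)

noncomputable instance EfamNS : ∀ i, NormedSpace 𝕜 (Efam 𝕜 E m i)
  | ⟨0, _⟩ => inferInstanceAs (NormedSpace 𝕜 E)
  | ⟨1, _⟩ => inferInstanceAs (NormedSpace 𝕜 (E →L[𝕜] 𝕜))
  | ⟨_ + 2, _⟩ => inferInstanceAs (NormedSpace 𝕜 𝕜)

/-- The input vector `(x, φ, λ₁, …, λ_m) ∈ E × E' × 𝕜^m`. -/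
noncomputable def mk17 (x : E) (φ : E →L[𝕜] 𝕜) (l : Fin m → 𝕜) : ∀ i, Efam 𝕜 E m i
  | ⟨0, _⟩ => x
  | ⟨1, _⟩ => φ
  | ⟨j + 2, h⟩ => l ⟨j, by omega⟩

/-- Signed sums in a Hilbert space have mean square `‖z‖² + ∑ ‖y j‖²`; the translate `z` is what
makes the induction on `k` work. -/
theorem sum_sign_norm_sq (𝕜 : Type*) [RCLike 𝕜] (k : ℕ) (z : 𝕜) (y : Fin k → 𝕜) :
    ∑ ε : Fin k → Bool, ‖z + ∑ j, (if ε j then y j else -y j)‖ ^ 2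
      = 2 ^ k * (‖z‖ ^ 2 + ∑ j, ‖y j‖ ^ 2) := by
  induction k generalizing z with
  | zero => simp
  | succ k ih =>
    rw [← (Fin.consEquiv (fun _ : Fin (k + 1) => Bool)).sum_comp, Fintype.sum_prod_type]
    simp only [Fin.consEquiv, Equiv.coe_fn_mk, Fin.sum_univ_succ, Fin.cons_zero, Fin.cons_succ,
      Fintype.sum_bool, if_true, ← add_assoc, ih, Bool.false_eq_true, if_false]
    have h := parallelogram_law_with_norm 𝕜 z (y 0)
    rw [← sub_eq_add_neg, pow_succ]
    linear_combination 2 ^ k * h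

/-- Orthogonality of the Rademacher signs. -/
theorem radNorm_scalar {𝕜 : Type*} [RCLike 𝕜] {k : ℕ} (y : Fin k → 𝕜) :
    radNorm y = Real.sqrt (∑ j, ‖y j‖ ^ 2) := by
  have h := sum_sign_norm_sq 𝕜 k 0 y
  simp only [zero_add, norm_zero] at h
  rw [radNorm, h]
  congr 1
  field_simp
  ring

/-- Hölder's inequality for several sequences, with `∑ 1 / p i ≥ 1 / 2` so that the product lies
in `ℓ²`. -/
theorem sum_prod_sq_le {N k : ℕ} (p : Fin N → ℝ) (hp : ∀ i, 0 < p i)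
    (hs : (1 : ℝ) / 2 ≤ ∑ i, 1 / p i) (a : Fin N → Fin k → ℝ) (ha : ∀ i j, 0 ≤ a i j) :
    ∑ j, (∏ i, a i j) ^ 2 ≤ (∏ i, (∑ j, a i j ^ p i) ^ (1 / p i)) ^ 2 := by
  have hnn : ∀ i, ∀ j ∈ Finset.univ, 0 ≤ a i j ^ p i := fun i j _ => Real.rpow_nonneg (ha i j) _
  have hS0 : ∀ i, 0 ≤ ∑ j, a i j ^ p i := fun i => Finset.sum_nonneg (hnn i)
  by_cases h0 : ∃ i, ∑ j, a i j ^ p i = 0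
  · obtain ⟨i, hi⟩ := h0
    refine le_trans (le_of_eq ?_) (sq_nonneg _)
    refine Finset.sum_eq_zero fun j _ => ?_
    have h1 := (Finset.sum_eq_zero_iff_of_nonneg (hnn i)).1 hi j (Finset.mem_univ j)
    have h2 : a i j = 0 := (Real.rpow_eq_zero (ha i j) (hp i).ne').1 h1
    rw [Finset.prod_eq_zero (Finset.mem_univ i) h2]
    simp
  push Not at h0
  set S : Fin N → ℝ := fun i => ∑ j, a i j ^ p i with hS
  have hSpos : ∀ i, 0 < S i := fun i => lt_of_le_of_ne (hS0 i) (h0 i).symm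
  set s : ℝ := ∑ i, 1 / p i with hsdef
  have hspos : 0 < s := by linarith
  -- Normalised `p i`-th powers: each row of `b` sums to `1`.
  let b : Fin N → Fin k → ℝ := fun i j => a i j ^ p i / S i
  have hb0 : ∀ i j, 0 ≤ b i j := fun i j => div_nonneg (hnn i j (Finset.mem_univ j)) (hS0 i)
  have hbsum : ∀ i, ∑ j, b i j = 1 := fun i => by
    simp only [b, ← Finset.sum_div]
    exact div_self (h0 i)
  have hb1 : ∀ i j, b i j ≤ 1 := fun i j => by
    rw [← hbsum i]
    exact Finset.single_le_sum (fun j _ => hb0 i j) (Finset.mem_univ j)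
  let w : Fin N → ℝ := fun i => (1 / p i) / s
  have hw0 : ∀ i, 0 ≤ w i := fun i => div_nonneg (one_div_nonneg.2 (hp i).le) hspos.le
  have hw1 : ∑ i, w i = 1 := by
    simp only [w, ← Finset.sum_div]
    exact div_self hspos.ne'
  have hab : ∀ i j, a i j = b i j ^ (1 / p i) * S i ^ (1 / p i) := fun i j => by
    rw [← Real.mul_rpow (hb0 i j) (hS0 i), div_mul_cancel₀ _ (h0 i), ← Real.rpow_mul (ha i j),
      mul_one_div_cancel (hp i).ne', Real.rpow_one]
  have key : ∀ j, (∏ i, b i j ^ (1 / p i)) ^ 2 ≤ ∑ i, w i * b i j := fun j => by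
    have hG0 : 0 ≤ ∏ i, b i j ^ w i :=
      Finset.prod_nonneg fun i _ => Real.rpow_nonneg (hb0 i j) _
    have hG1 : ∏ i, b i j ^ w i ≤ 1 := Finset.prod_le_one
      (fun i _ => Real.rpow_nonneg (hb0 i j) _)
      (fun i _ => Real.rpow_le_one (hb0 i j) (hb1 i j) (hw0 i))
    have e : (∏ i, b i j ^ (1 / p i)) ^ 2 = (∏ i, b i j ^ w i) ^ (2 * s) := by
      rw [mul_comm, Real.rpow_mul hG0, Real.rpow_two,
        ← Real.finsetProd_rpow _ _ (fun i _ => Real.rpow_nonneg (hb0 i j) _)]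
      congr 1
      refine Finset.prod_congr rfl fun i _ => ?_
      rw [← Real.rpow_mul (hb0 i j), div_mul_cancel₀ _ hspos.ne']
    rw [e]
    -- Since `2 * s ≥ 1` and the weighted geometric mean is at most `1`, the power only decreases.
    calc (∏ i, b i j ^ w i) ^ (2 * s) ≤ (∏ i, b i j ^ w i) ^ (1 : ℝ) :=
          Real.rpow_le_rpow_of_exponent_ge_of_imp hG0 hG1 (by linarith) (by intros; linarith)
      _ = ∏ i, b i j ^ w i := Real.rpow_one _
      _ ≤ ∑ i, w i * b i j := Real.geom_mean_le_arith_mean_weighted _ _ _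
          (fun i _ => hw0 i) hw1 (fun i _ => hb0 i j)
  calc ∑ j, (∏ i, a i j) ^ 2
      = ∑ j, (∏ i, b i j ^ (1 / p i)) ^ 2 * (∏ i, S i ^ (1 / p i)) ^ 2 := by
        refine Finset.sum_congr rfl fun j _ => ?_
        rw [← mul_pow, ← Finset.prod_mul_distrib]
        congr 1
        exact Finset.prod_congr rfl fun i _ => hab i j
    _ = (∑ j, (∏ i, b i j ^ (1 / p i)) ^ 2) * (∏ i, S i ^ (1 / p i)) ^ 2 := by
        rw [Finset.sum_mul]
    _ ≤ 1 * (∏ i, S i ^ (1 / p i)) ^ 2 := by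
        refine mul_le_mul_of_nonneg_right ?_ (sq_nonneg _)
        calc ∑ j, (∏ i, b i j ^ (1 / p i)) ^ 2 ≤ ∑ j, ∑ i, w i * b i j :=
              Finset.sum_le_sum fun j _ => key j
          _ = ∑ i, w i * ∑ j, b i j := by
              rw [Finset.sum_comm]
              simp only [Finset.mul_sum]
          _ = 1 := by simp only [hbsum, mul_one, hw1]
    _ = _ := one_mul _

/-- Every scalar-valued form has all the types with `∑ 1 / p i ≥ 1 / 2`. -/
theorem hasType_scalar {𝕜 : Type*} [RCLike 𝕜] {N : ℕ} {G : Fin N → Type*}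
    [∀ i, NormedAddCommGroup (G i)] [∀ i, NormedSpace 𝕜 (G i)]
    (T : ContinuousMultilinearMap 𝕜 G 𝕜) (p : Fin N → ℝ) (hp : ∀ i, 0 < p i)
    (hs : (1 : ℝ) / 2 ≤ ∑ i, 1 / p i) : HasType T p := by
  refine ⟨‖T‖ + 1, by positivity, fun k x => ?_⟩
  have hP : 0 ≤ ∏ i, (∑ j, ‖x i j‖ ^ p i) ^ (1 / p i) :=
    Finset.prod_nonneg fun i _ => Real.rpow_nonneg
      (Finset.sum_nonneg fun j _ => Real.rpow_nonneg (norm_nonneg _) _) _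
  rw [radNorm_scalar]
  refine Real.sqrt_le_iff.2 ⟨by positivity, ?_⟩
  calc ∑ j, ‖T (fun i => x i j)‖ ^ 2
      ≤ ∑ j, (‖T‖ + 1) ^ 2 * (∏ i, ‖x i j‖) ^ 2 := by
        refine Finset.sum_le_sum fun j _ => ?_
        rw [← mul_pow]
        refine pow_le_pow_left₀ (norm_nonneg _) ((T.le_opNorm _).trans ?_) 2
        exact mul_le_mul_of_nonneg_right (by linarith)
          (Finset.prod_nonneg fun i _ => norm_nonneg _)
    _ = (‖T‖ + 1) ^ 2 * ∑ j, (∏ i, ‖x i j‖) ^ 2 := by rw [Finset.mul_sum]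
    _ ≤ (‖T‖ + 1) ^ 2 * (∏ i, (∑ j, ‖x i j‖ ^ p i) ^ (1 / p i)) ^ 2 :=
        mul_le_mul_of_nonneg_left
          (sum_prod_sq_le p hp hs (fun i j => ‖x i j‖) fun i j => norm_nonneg _) (sq_nonneg _)
    _ = _ := by rw [mul_pow]

theorem linHasType_id_of_isometry {𝕜 : Type*} [RCLike 𝕜] {E F : Type*}
    [NormedAddCommGroup E] [NormedSpace 𝕜 E] [NormedAddCommGroup F] [NormedSpace 𝕜 F]
    (u : E →L[𝕜] F) (hu : ∀ x, ‖u x‖ = ‖x‖) (r : ℝ) (h : LinHasType u r) :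
    LinHasType (ContinuousLinearMap.id 𝕜 E) r := by
  obtain ⟨C, hC, h⟩ := h
  refine ⟨C, hC, fun k x => ?_⟩
  have e : radNorm (fun j => u (x j)) = radNorm x := by
    simp only [radNorm]
    congr 2
    refine Finset.sum_congr rfl fun ε _ => ?_
    rw [← hu, map_sum]
    congr 2
    refine Finset.sum_congr rfl fun j _ => ?_
    split_ifs <;> simp
  have h2 := h k x
  rw [e] at h2
  exact h2

theorem mk17_eta (v : ∀ i, Efam 𝕜 E m i) :
    mk17 𝕜 E m (v 0) (v 1) (fun j => v j.succ.succ) = v := by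
  funext i
  match i with
  | ⟨0, _⟩ => rfl
  | ⟨1, _⟩ => rfl
  | ⟨_ + 2, _⟩ => rfl

/-- `I₁(T)` is isometric. -/
theorem norm_curryLeft_mk17 (T : ContinuousMultilinearMap 𝕜 (Efam 𝕜 E m) 𝕜)
    (hT : ∀ (x : E) (φ : E →L[𝕜] 𝕜) (l : Fin m → 𝕜),
      T (mk17 𝕜 E m x φ l) = (∏ j, l j) * φ x) (x : E) :
    ‖(T.curryLeft :
        E →L[𝕜] ContinuousMultilinearMap 𝕜 (fun i : Fin (m + 1) => Efam 𝕜 E m i.succ) 𝕜) x‖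
        = ‖x‖ := by
  set A : ContinuousMultilinearMap 𝕜 (fun i : Fin (m + 1) => Efam 𝕜 E m i.succ) 𝕜 :=
    (T.curryLeft :
        E →L[𝕜] ContinuousMultilinearMap 𝕜 (fun i : Fin (m + 1) => Efam 𝕜 E m i.succ) 𝕜) x
    with hA
  have hval : ∀ v : ∀ i : Fin (m + 1), Efam 𝕜 E m i.succ,
      A v = (∏ j : Fin m, (show 𝕜 from v j.succ)) * (show E →L[𝕜] 𝕜 from v 0) x := by
    intro v
    rw [← hT]
    have e := mk17_eta 𝕜 E m (Fin.cons (α := Efam 𝕜 E m) x v)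
    exact congrArg T e.symm
  have hprod : ∀ v : ∀ i : Fin (m + 1), Efam 𝕜 E m i.succ,
      ∏ i, ‖v i‖ = ‖(show E →L[𝕜] 𝕜 from v 0)‖ * ∏ j : Fin m, ‖(show 𝕜 from v j.succ)‖ := by
    intro v
    rw [Fin.prod_univ_succ]
    rfl
  apply le_antisymm
  · refine ContinuousMultilinearMap.opNorm_le_bound (norm_nonneg x) fun v => ?_
    rw [hval, hprod, norm_mul, norm_prod]
    calc _ ≤ (∏ j : Fin m, ‖(show 𝕜 from v j.succ)‖) * (‖(show E →L[𝕜] 𝕜 from v 0)‖ * ‖x‖) :=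
          mul_le_mul_of_nonneg_left (ContinuousLinearMap.le_opNorm _ _)
            (Finset.prod_nonneg fun _ _ => norm_nonneg _)
      _ = _ := by ring
  -- The norm is attained at a norming functional `φ` of `x` and scalars equal to `1`.
  · obtain ⟨φ, hφ, hx⟩ := exists_dual_vector'' 𝕜 x
    let v : ∀ i : Fin (m + 1), Efam 𝕜 E m i.succ := fun i => mk17 𝕜 E m x φ (fun _ => 1) i.succ
    have h1 : A v = φ x := by
      rw [hval]
      have : (∏ j : Fin m, (show 𝕜 from v j.succ)) = 1 :=
        Finset.prod_eq_one fun j _ => rfl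
      rw [this, one_mul]
      rfl
    have h2 : ∏ i, ‖v i‖ ≤ 1 := by
      rw [hprod]
      have : (∏ j : Fin m, ‖(show 𝕜 from v j.succ)‖) = 1 :=
        Finset.prod_eq_one fun j _ => norm_one
      rw [this, mul_one]
      exact hφ
    have h3 := A.le_opNorm v
    rw [h1, hx, RCLike.norm_ofReal, abs_of_nonneg (norm_nonneg x)] at h3
    exact h3.trans (mul_le_of_le_one_right (norm_nonneg _) h2)

/-- Let `n = m + 2 ≥ 2`, `1 < r₁ ≤ 2`, and let `E` be a Banach space not having type `r₁`.
The `n`-linear form `T : E × E' × 𝕜^{n-2} → 𝕜`, `T(x, φ, λ₁,…,λ_{n-2}) = λ₁ ⋯ λ_{n-2} φ(x)`,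
has every proper type `(p₁,…,pₙ)`, but the bounded linear operator
`I₁(T) = T.curryLeft : E → L(E', 𝕜,…,𝕜; 𝕜)`, which satisfies `‖I₁(T)(x)‖ = ‖x‖` for all
`x ∈ E`, does not have type `r₁`. -/
theorem finite_type_form_not_in_linearization
    [CompleteSpace E]
    (r₁ : ℝ) (hr₁ : 1 < r₁) (hr₂ : r₁ ≤ 2)
    (hE : ¬ LinHasType (ContinuousLinearMap.id 𝕜 E) r₁)
    (T : ContinuousMultilinearMap 𝕜 (Efam 𝕜 E m) 𝕜)
    (hT : ∀ (x : E) (φ : E →L[𝕜] 𝕜) (l : Fin m → 𝕜),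
      T (mk17 𝕜 E m x φ l) = (∏ j, l j) * φ x) :
    (∀ p : Fin (m + 2) → ℝ, (∀ i, 0 < p i) →
        (1 : ℝ) / 2 ≤ ∑ i, 1 / p i → ∑ i, 1 / p i < 1 → HasType T p) ∧
    (∀ x : E, ‖(T.curryLeft :
        E →L[𝕜] ContinuousMultilinearMap 𝕜 (fun i : Fin (m + 1) => Efam 𝕜 E m i.succ) 𝕜) x‖
        = ‖x‖) ∧
    ¬ LinHasType (T.curryLeft :
        E →L[𝕜] ContinuousMultilinearMap 𝕜 (fun i : Fin (m + 1) => Efam 𝕜 E m i.succ) 𝕜) r₁ := by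
  refine ⟨fun p hp hs _ => hasType_scalar T p hp hs, ?_⟩
  have hiso := norm_curryLeft_mk17 𝕜 E m T hT
  exact ⟨hiso, fun h => hE (linHasType_id_of_isometry _ hiso r₁ h)⟩

end Stmt17
end
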